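/- Define S(a,b) := Σ_{k≠0} (1/k) ( ∫_𝕋 J₁(kA(x)) e^{−ikB(x)} dx ) e^{ikI}, with A(x) := A_* + a(x), B(x) := x + b(x) for a fixed A_* > 0. There exists δ > 0 such that if ‖(a,b)‖₃ < δ, then for every s ≥ 7/2 one has ‖S(a,b)‖_s ≤ C(s)(1 + ‖(a,b)‖_{s−1/2}) for positive constants C(s). -/

import Mathlib

/-!
# Tame estimates for the action functional

Write `c = Astar` and `A = c + a`. Absolute convergence of the series makes `(1 / k) M_k`, with
`M_k = ∫ J₁(k A(x)) e^{-ik(x + b(x))} dx`, the `k`-th Fourier coefficient of `S(a, b)`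
(`fc_Sfun`). As `J₁` is real and odd, `|M_{-k}| = |M_k|`, so the claim is that
`∑_{k ≥ 1} k^{2s-2} |M_k|² ≲ 1 + ‖(a, b)‖²_{s-1/2}`.

*Removing the Bessel function.* Poisson's formula
`J₁(θ) = (θ / π) ∫_{-1}^{1} e^{iθτ} √(1 - τ²) dτ` is shifted to the vertical sides `τ = ±1 + it`,
`0 ≤ t ≤ 1`, of a rectangle, on which the square root is at most `2√t`; the top side is
exponentially small in `k`. With `u = k t` this expresses `M_k` through the integrals
`G_k(u) = ∫ A e^{-uA} e^{-ik(x + ψ)} dx`, `ψ = b ∓ A` (`norm_Mk_le`). The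
amplitude of `G_k(u)` no longer depends on `k`, and it decays exponentially in `u`. Integrating
against `√t dt` yields a factor `k^{-3/2}`, which together with the prefactor `k` in Poisson's
formula gives the gain of `k^{-1/2}` (`weighted_block`).

*A square function bound.* If `|ψ'| ≤ 1/2`, then `x ↦ x + ψ(x)` is a change of variable of the
circle, so that the functions `e^{-ik(x + ψ)}` satisfy Bessel's inequality (`bessel_like`). Along a
segment of pairs `(A, ψ)` this bounds differences of `G_k`, in `ℓ²` over `|k| ≤ κ`, by the `L²`
differences of `A` and of `κ ψ` (`Gosc_diff`).

*Tameness.* For `2^n ≤ k < 2^{n+1}` the trigonometric polynomials `a, b` are split at frequency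
`L = 2^{n-m-1}`, where `m ≥ s`. The modes below `L` extend to the strip of width `log L / L` with
uniform bounds, so shifting the `x`-contour there makes their contribution `O(2^{-nm})`
(`Gosc_low`, `strip_decay`). By `Gosc_diff`, the modes above `L` contribute
`4^n ∑_{|j| > L} (|â_j|² + |b̂_j|²)` (`Gosc_block`). Multiplying by `2^{n(2s-3)}` and summing over
`n`, each mode `j` is counted for `2^n ≲ |j|` only, and the geometric sum gives
`⟨j⟩^{2s-1} (|â_j|² + |b̂_j|²)` (`Qb_sum`).

Smallness in `H³` is used only through `H³ ⊂ C²`: it bounds `∑ ⟨j⟩² |â_j|` and `∑ ⟨j⟩² |b̂_j|`, and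
hence `|a| ≤ c / 2` and `|ψ'| ≤ 1/2`, also in the complex strips (`wsum_le`). The constants do not depend
on the number of modes, so smooth `a, b` follow by truncating their Fourier series
(`Mk_sum_smooth`).
-/

open scoped Real BigOperators
open MeasureTheory

noncomputable section

def jb (j : ℤ) : ℝ := max 1 |(j : ℝ)|

def fc (u : ℝ → ℂ) (j : ℤ) : ℂ :=
  (1 / (2 * (π : ℂ))) * ∫ x in (0:ℝ)..(2 * π), u x * Complex.exp (-Complex.I * (j : ℂ) * (x : ℂ))

def fcR (u : ℝ → ℝ) (j : ℤ) : ℂ := fc (fun x => (u x : ℂ)) j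

def sobNorm (s : ℝ) (u : ℝ → ℂ) : ℝ :=
  Real.sqrt (∑' j : ℤ, jb j ^ (2 * s) * ‖fc u j‖ ^ 2)

def memHs (s : ℝ) (u : ℝ → ℂ) : Prop :=
  Summable (fun j : ℤ => jb j ^ (2 * s) * ‖fc u j‖ ^ 2)

def sobNormR (s : ℝ) (u : ℝ → ℝ) : ℝ := sobNorm s (fun x => (u x : ℂ))
def memHsR (s : ℝ) (u : ℝ → ℝ) : Prop := memHs s (fun x => (u x : ℂ))

def pairNorm (s : ℝ) (a b : ℝ → ℝ) : ℝ := sobNormR s a + sobNormR s b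

def seqNorm (s : ℝ) (c : ℤ → ℂ) : ℝ :=
  Real.sqrt (∑' j : ℤ, jb j ^ (2 * s) * ‖c j‖ ^ 2)

def memSeq (s : ℝ) (c : ℤ → ℂ) : Prop :=
  Summable (fun j : ℤ => jb j ^ (2 * s) * ‖c j‖ ^ 2)

def smoothPer (u : ℝ → ℝ) : Prop :=
  ContDiff ℝ (⊤ : ℕ∞) u ∧ Function.Periodic u (2 * π)

def J1 (θ : ℝ) : ℝ :=
  ((1 / (2 * (π : ℂ))) * ∫ φ in (0:ℝ)..(2 * π),
    Complex.exp (Complex.I * (θ : ℂ) * (Real.sin φ : ℂ)) * Complex.exp (-Complex.I * (φ : ℂ))).re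

/-- The action functional S(a,b), via its Fourier expansion in terms of the Bessel function. -/
def Sfun (Astar : ℝ) (a b : ℝ → ℝ) (I : ℝ) : ℂ :=
  ∑' k : ℤ, if k = 0 then 0 else
    (1 / (k : ℂ)) * (∫ x in (0:ℝ)..(2 * π),
        ((J1 ((k : ℝ) * (Astar + a x)) : ℝ) : ℂ) *
          Complex.exp (-Complex.I * (k : ℂ) * ((x + b x : ℝ) : ℂ))) *
      Complex.exp (Complex.I * (k : ℂ) * (I : ℂ))

/-! ### The Bessel function and its Poisson integral -/

lemma J1_eq_cos (θ : ℝ) :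
    J1 θ = (1 / (2 * π)) * ∫ φ in (0:ℝ)..(2 * π), Real.cos (θ * Real.sin φ - φ) := by
  have h1 : (1 / (2 * (π : ℂ))) = ((1 / (2 * π) : ℝ) : ℂ) := by push_cast; rfl
  rw [J1, h1, Complex.re_ofReal_mul]
  congr 1
  have h2 := Complex.reCLM.intervalIntegral_comp_comm (μ := volume) (a := 0) (b := 2 * π)
    (f := fun φ : ℝ => Complex.exp (Complex.I * (θ : ℂ) * (Real.sin φ : ℂ)) *
      Complex.exp (-Complex.I * (φ : ℂ)))
    (by apply Continuous.intervalIntegrable; fun_prop)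
  rw [← Complex.reCLM_apply, ← h2]
  apply intervalIntegral.integral_congr
  intro φ _
  simp only [Complex.reCLM_apply]
  rw [← Complex.exp_add, ← Complex.exp_ofReal_mul_I_re]
  congr 2
  push_cast
  ring

lemma J1_continuous : Continuous J1 := by
  have : J1 = fun θ => (1 / (2 * π)) * ∫ φ in (0:ℝ)..(2 * π), Real.cos (θ * Real.sin φ - φ) :=
    funext J1_eq_cos
  rw [this]
  refine continuous_const.mul ?_
  exact intervalIntegral.continuous_parametric_intervalIntegral_of_continuous' (by fun_prop) _ _

lemma abs_J1_le (θ : ℝ) : |J1 θ| ≤ 1 := by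
  rw [J1_eq_cos, abs_mul]
  have h : |∫ φ in (0:ℝ)..(2 * π), Real.cos (θ * Real.sin φ - φ)| ≤ 1 * |2 * π - 0| := by
    rw [← Real.norm_eq_abs]
    apply intervalIntegral.norm_integral_le_of_norm_le_const
    intro x _
    exact Real.abs_cos_le_one _
  have hp := Real.pi_pos
  rw [sub_zero, abs_of_pos (by positivity : 0 < 2 * π)] at h
  rw [abs_of_pos (by positivity : 0 < 1 / (2 * π))]
  calc _ ≤ 1 / (2 * π) * (1 * (2 * π)) := by gcongr
    _ = 1 := by field_simp

/-- Integrating by parts in the Bessel integral. -/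
lemma J1_eq_cos_sq (θ : ℝ) :
    J1 θ = (θ / (2 * π)) * ∫ φ in (0:ℝ)..(2 * π),
      Real.cos φ ^ 2 * Real.cos (θ * Real.sin φ) := by
  have hp := Real.pi_pos
  rw [J1_eq_cos]
  have key : ∫ φ in (0:ℝ)..(2 * π), (Real.cos (θ * Real.sin φ - φ)
      - θ * (Real.cos φ ^ 2 * Real.cos (θ * Real.sin φ))) = 0 := by
    rcases eq_or_ne θ 0 with rfl | hθ
    · simp
    · have := intervalIntegral.integral_eq_sub_of_hasDerivAt (a := 0) (b := 2 * π)
        (f := fun φ => Real.sin (θ * Real.sin φ) / θ - Real.cos φ * Real.sin (θ * Real.sin φ))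
        (f' := fun φ => (Real.cos (θ * Real.sin φ - φ)
          - θ * (Real.cos φ ^ 2 * Real.cos (θ * Real.sin φ)))) ?_ ?_
      · rw [this]; simp
      · intro φ _
        have h1 : HasDerivAt (fun φ => Real.sin (θ * Real.sin φ))
          (Real.cos (θ * Real.sin φ) * (θ * Real.cos φ)) φ :=
          ((Real.hasDerivAt_sin φ).const_mul θ).sin
        refine ((h1.div_const θ).sub ((Real.hasDerivAt_cos φ).mul h1)).congr_deriv ?_
        rw [Real.cos_sub]
        field_simp
        ring
      · apply Continuous.intervalIntegrable; fun_prop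
  rw [intervalIntegral.integral_sub (by apply Continuous.intervalIntegrable; fun_prop)
    (by apply Continuous.intervalIntegrable; fun_prop), intervalIntegral.integral_const_mul,
    sub_eq_zero] at key
  rw [key]; ring

lemma J1_neg (θ : ℝ) : J1 (-θ) = - J1 θ := by
  rw [J1_eq_cos_sq, J1_eq_cos_sq]
  simp only [neg_mul, Real.cos_neg]
  ring

/-- Poisson's integral representation of `J₁`. -/
lemma J1_poisson (θ : ℝ) :
    J1 θ = (θ / π) * ∫ τ in (-1:ℝ)..1, Real.sqrt (1 - τ ^ 2) * Real.cos (θ * τ) := by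
  have hp := Real.pi_pos
  set g : ℝ → ℝ := fun φ => Real.cos φ ^ 2 * Real.cos (θ * Real.sin φ) with hg
  have hgc : Continuous g := by rw [hg]; fun_prop
  have hper : Function.Periodic g (2 * π) := by intro x; simp [hg]
  have e1 : ∫ φ in (0:ℝ)..(2 * π), g φ = ∫ φ in (-(π/2))..(-(π/2) + 2 * π), g φ := by
    have := hper.intervalIntegral_add_eq 0 (-(π/2))
    simpa using this
  have e2 : ∫ φ in (-(π/2))..(-(π/2) + 2 * π), g φ
      = (∫ φ in (-(π/2))..(π/2), g φ) + ∫ φ in (π/2)..(-(π/2) + 2 * π), g φ :=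
    (intervalIntegral.integral_add_adjacent_intervals (hgc.intervalIntegrable _ _)
      (hgc.intervalIntegrable _ _)).symm
  have e3 : ∫ φ in (π/2)..(-(π/2) + 2 * π), g φ = ∫ φ in (-(π/2))..(π/2), g φ := by
    have := intervalIntegral.integral_comp_sub_left g (a := -(π/2)) (b := π/2) π
    rw [show π - π / 2 = π / 2 by ring, show π - -(π/2) = -(π/2) + 2 * π by ring] at this
    rw [← this]
    apply intervalIntegral.integral_congr
    intro x _
    simp [hg, Real.cos_pi_sub, Real.sin_pi_sub]
  have e4 : ∫ φ in (-(π/2))..(π/2), g φ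
      = ∫ τ in (-1:ℝ)..1, Real.sqrt (1 - τ ^ 2) * Real.cos (θ * τ) := by
    have := intervalIntegral.integral_comp_mul_deriv (a := -(π/2)) (b := π/2)
      (f := Real.sin) (f' := Real.cos) (g := fun τ => Real.sqrt (1 - τ ^ 2) * Real.cos (θ * τ))
      (fun x _ => Real.hasDerivAt_sin x) (Real.continuous_cos.continuousOn) (by fun_prop)
    rw [Real.sin_neg, Real.sin_pi_div_two] at this
    rw [← this]
    apply intervalIntegral.integral_congr
    intro x hx
    rw [Set.uIcc_of_le (by linarith)] at hx
    have hc : 0 ≤ Real.cos x := Real.cos_nonneg_of_mem_Icc hx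
    have : Real.sqrt (1 - Real.sin x ^ 2) = Real.cos x := by
      rw [← Real.cos_sq', Real.sqrt_sq hc]
    simp only [Function.comp, this, hg]
    ring
  rw [J1_eq_cos_sq, e1, e2, e3, e4]
  field_simp
  ring

/-- The principal square root of `1 - ζ²`. -/
def csq (ζ : ℂ) : ℂ := (1 - ζ ^ 2) ^ (1 / 2 : ℂ)

lemma csq_real {τ : ℝ} (h : τ ∈ Set.uIcc (-1:ℝ) 1) : csq τ = (Real.sqrt (1 - τ ^ 2) : ℂ) := by
  rw [Set.uIcc_of_le (by norm_num)] at h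
  have : 0 ≤ 1 - τ ^ 2 := by nlinarith [h.1, h.2]
  rw [csq, Real.sqrt_eq_rpow, Complex.ofReal_cpow this]
  push_cast; rfl

lemma J1_poisson_complex (θ : ℝ) :
    (J1 θ : ℂ) = ((θ : ℂ) / π) * ∫ τ in (-1:ℝ)..1, Complex.exp (Complex.I * θ * τ) * csq τ := by
  have e : ∫ τ in (-1:ℝ)..1, Complex.exp (Complex.I * θ * τ) * csq τ
     = ∫ τ in (-1:ℝ)..1, (((Real.sqrt (1 - τ ^ 2) * Real.cos (θ * τ) : ℝ) : ℂ) +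
        ((Real.sqrt (1 - τ ^ 2) * Real.sin (θ * τ) : ℝ) : ℂ) * Complex.I) := by
    apply intervalIntegral.integral_congr
    intro τ hτ
    simp only
    rw [csq_real hτ, show Complex.I * (θ:ℂ) * (τ:ℂ) = ((θ * τ : ℝ) : ℂ) * Complex.I by
      push_cast; ring, Complex.exp_mul_I]
    push_cast
    ring
  have o : ∫ τ in (-1:ℝ)..1, (Real.sqrt (1 - τ ^ 2) * Real.sin (θ * τ)) = 0 := by
    have := intervalIntegral.integral_comp_neg (a := -1) (b := 1)
      (fun τ : ℝ => Real.sqrt (1 - τ ^ 2) * Real.sin (θ * τ))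
    simp only [neg_sq, mul_neg, Real.sin_neg, neg_neg, intervalIntegral.integral_neg] at this
    linarith
  rw [e, intervalIntegral.integral_add (by apply Continuous.intervalIntegrable; fun_prop)
    (by apply Continuous.intervalIntegrable; fun_prop), intervalIntegral.integral_mul_const,
    intervalIntegral.integral_ofReal, intervalIntegral.integral_ofReal, o, J1_poisson]
  push_cast
  ring

lemma csq_re_nonneg {a b : ℝ} (ha : |a| ≤ 1) :
    0 ≤ (1 - ((a : ℂ) + b * Complex.I) ^ 2).re := by
  have : (1 - ((a : ℂ) + b * Complex.I) ^ 2).re = 1 - a ^ 2 + b ^ 2 := by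
    simp [sq]; ring
  rw [this]
  have := abs_le.1 ha
  nlinarith [this.1, this.2, sq_nonneg b]

lemma csq_continuousAt {a b : ℝ} (ha : |a| ≤ 1) :
    ContinuousAt csq ((a : ℂ) + b * Complex.I) := by
  have h1 : ContinuousAt (fun x : ℂ => x ^ (1 / 2 : ℂ)) (1 - ((a : ℂ) + b * Complex.I) ^ 2) :=
    Complex.continuousAt_cpow_const_of_re_pos (Or.inl (csq_re_nonneg ha)) (by norm_num)
  exact ContinuousAt.comp (f := fun ζ : ℂ => 1 - ζ ^ 2) (g := fun x : ℂ => x ^ (1 / 2 : ℂ)) h1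
    (by fun_prop)

lemma norm_csq_le {a b : ℝ} : ‖csq ((a : ℂ) + b * Complex.I)‖ ^ 2
    = ‖1 - ((a : ℂ) + b * Complex.I) ^ 2‖ := by
  rw [← norm_pow, csq]
  have := Complex.cpow_nat_inv_pow (1 - ((a : ℂ) + b * Complex.I) ^ 2) (n := 2) two_ne_zero
  rw [one_div]
  exact congrArg norm (by exact_mod_cast this)

lemma csq_differentiableAt {a b : ℝ} (ha : |a| < 1) :
    DifferentiableAt ℂ csq ((a : ℂ) + b * Complex.I) := by
  unfold csq
  apply DifferentiableAt.cpow (by fun_prop) (by fun_prop)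
  left
  have : (1 - ((a : ℂ) + b * Complex.I) ^ 2).re = 1 - a ^ 2 + b ^ 2 := by
    simp [sq]; ring
  rw [this]
  have := abs_lt.1 ha
  nlinarith [this.1, this.2, sq_nonneg b]

/-- Shifting the contour in Poisson's integral to the two steepest descent half-lines
`±1 + i t`, cut off at height `1`. -/
lemma poisson_shift (z : ℝ) :
    ∫ τ in (-1:ℝ)..1, Complex.exp (Complex.I * z * τ) * csq τ =
      (∫ τ in (-1:ℝ)..1, Complex.exp (Complex.I * z * (τ + Complex.I)) * csq (τ + Complex.I))
      - Complex.I * (∫ t in (0:ℝ)..1, Complex.exp (Complex.I * z * (1 + t * Complex.I))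
          * csq (1 + t * Complex.I))
      + Complex.I * (∫ t in (0:ℝ)..1, Complex.exp (Complex.I * z * (-1 + t * Complex.I))
          * csq (-1 + t * Complex.I)) := by
  have := Complex.integral_boundary_rect_eq_zero_of_continuousOn_of_differentiableOn
    (fun ζ => Complex.exp (Complex.I * z * ζ) * csq ζ) (-1) (1 + Complex.I) ?_ ?_
  · simp at this
    linear_combination this
  · intro ζ hζ
    rw [Complex.mem_reProdIm] at hζ
    simp only [Complex.neg_re, Complex.one_re, Complex.add_re, Complex.I_re, add_zero] at hζ
    rw [Set.uIcc_of_le (by norm_num)] at hζ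
    have := csq_continuousAt (a := ζ.re) (b := ζ.im) (abs_le.2 hζ.1)
    rw [Complex.re_add_im] at this
    exact ContinuousAt.continuousWithinAt (by fun_prop)
  · intro ζ hζ
    rw [Complex.mem_reProdIm] at hζ
    simp only [Complex.neg_re, Complex.one_re, Complex.add_re, Complex.I_re, add_zero] at hζ
    rw [min_eq_left (by norm_num), max_eq_right (by norm_num)] at hζ
    have := csq_differentiableAt (a := ζ.re) (b := ζ.im) (abs_lt.2 hζ.1)
    rw [Complex.re_add_im] at this
    exact DifferentiableAt.differentiableWithinAt (by fun_prop)

/-- Cauchy–Schwarz for continuous functions on an interval. -/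
lemma integral_cs {a b : ℝ} (hab : a ≤ b) {f g : ℝ → ℝ} (hf : Continuous f) (hg : Continuous g) :
    (∫ x in a..b, f x * g x) ^ 2 ≤ (∫ x in a..b, f x ^ 2) * ∫ x in a..b, g x ^ 2 := by
  have h : ∀ t : ℝ, 0 ≤ (∫ x in a..b, g x ^ 2) * (t * t) + (2 * ∫ x in a..b, f x * g x) * t
      + ∫ x in a..b, f x ^ 2 := by
    intro t
    have h0 : 0 ≤ ∫ x in a..b, (f x + t * g x) ^ 2 :=
      intervalIntegral.integral_nonneg hab fun x _ => sq_nonneg _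
    have : ∫ x in a..b, (f x + t * g x) ^ 2
        = ∫ x in a..b, (f x ^ 2 + (2 * t) * (f x * g x) + (t * t) * g x ^ 2) := by
      congr 1; ext x; ring
    rw [this, intervalIntegral.integral_add, intervalIntegral.integral_add,
      intervalIntegral.integral_const_mul, intervalIntegral.integral_const_mul] at h0
    · linarith
    all_goals apply Continuous.intervalIntegrable; fun_prop
  have := discrim_le_zero h
  rw [discrim] at this
  nlinarith

/-! ### Bessel's inequality with a perturbed phase -/

/-- The characters `e^{-ik(x+ψ(x))}` are orthogonal for the weight `1 + ψ'`. -/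
lemma char_orth {ψ ψ' : ℝ → ℝ} (hψ : ∀ x, HasDerivAt ψ (ψ' x) x) (hc : Continuous ψ')
    (hper : ψ (2 * π) = ψ 0) (m : ℤ) :
    ∫ x in (0:ℝ)..(2 * π), Complex.exp (-(Complex.I * m * ((x + ψ x : ℝ) : ℂ))) *
      ((1 + ψ' x : ℝ) : ℂ) = if m = 0 then 2 * (π : ℂ) else 0 := by
  have hψc : Continuous ψ := continuous_iff_continuousAt.2 fun x => (hψ x).continuousAt
  split_ifs with hm
  · subst hm
    simp only [Int.cast_zero, mul_zero, zero_mul, neg_zero, Complex.exp_zero, one_mul]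
    rw [intervalIntegral.integral_ofReal, intervalIntegral.integral_add (by simp)
      (hc.intervalIntegrable _ _),
      intervalIntegral.integral_eq_sub_of_hasDerivAt (fun x _ => hψ x) (hc.intervalIntegrable _ _),
      hper]
    simp
  · have hm' : (m : ℂ) ≠ 0 := by exact_mod_cast hm
    have h := intervalIntegral.integral_eq_sub_of_hasDerivAt (a := 0) (b := 2 * π)
      (f := fun x : ℝ => Complex.exp (-(Complex.I * m * ((x + ψ x : ℝ) : ℂ))) /
        (-(Complex.I * m)))
      (f' := fun x : ℝ => Complex.exp (-(Complex.I * m * ((x + ψ x : ℝ) : ℂ))) *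
        ((1 + ψ' x : ℝ) : ℂ)) ?_ ?_
    · rw [h, hper]
      have : Complex.exp (-(Complex.I * m * ((2 * π + ψ 0 : ℝ) : ℂ)))
          = Complex.exp (-(Complex.I * m * ((0 + ψ 0 : ℝ) : ℂ))) := by
        rw [Complex.exp_eq_exp_iff_exists_int]
        refine ⟨-m, ?_⟩
        push_cast; ring
      rw [this, sub_self]
    · intro x _
      have h1 : HasDerivAt (fun x : ℝ => ((x + ψ x : ℝ) : ℂ)) ((1 + ψ' x : ℝ) : ℂ) x :=
        ((hasDerivAt_id x).add (hψ x)).ofReal_comp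
      refine (((h1.const_mul (Complex.I * m)).neg.cexp).div_const _).congr_deriv ?_
      have : Complex.I * m ≠ 0 := mul_ne_zero Complex.I_ne_zero hm'
      field_simp
      rw [mul_comm]; rfl
    · apply Continuous.intervalIntegrable; fun_prop

/-- The weighted `L²` norm of a finite combination of the functions `e^{-ik(x+ψ(x))}`. -/
lemma char_sum_sq {ψ ψ' : ℝ → ℝ} (hψ : ∀ x, HasDerivAt ψ (ψ' x) x) (hc : Continuous ψ')
    (hper : ψ (2 * π) = ψ 0) (K : Finset ℤ) (d : ℤ → ℂ) :
    ∫ x in (0:ℝ)..(2 * π), ‖∑ k ∈ K, d k * Complex.exp (-(Complex.I * k * ((x + ψ x : ℝ) : ℂ)))‖ ^ 2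
      * (1 + ψ' x) = 2 * π * ∑ k ∈ K, ‖d k‖ ^ 2 := by
  have hψc : Continuous ψ := continuous_iff_continuousAt.2 fun x => (hψ x).continuousAt
  have hpt : ∀ x : ℝ,
      ((‖∑ k ∈ K, d k * Complex.exp (-(Complex.I * k * ((x + ψ x : ℝ) : ℂ)))‖ ^ 2
        * (1 + ψ' x) : ℝ) : ℂ) = ∑ k ∈ K, ∑ l ∈ K, (d k * (starRingEnd ℂ) (d l)) *
          (Complex.exp (-(Complex.I * ((k - l : ℤ) : ℂ) * ((x + ψ x : ℝ) : ℂ))) *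
            ((1 + ψ' x : ℝ) : ℂ)) := by
    intro x
    rw [Complex.ofReal_mul, Complex.ofReal_pow, ← Complex.mul_conj', map_sum, Finset.sum_mul_sum,
      Finset.sum_mul]
    refine Finset.sum_congr rfl fun k _ => ?_
    rw [Finset.sum_mul]
    refine Finset.sum_congr rfl fun l _ => ?_
    have : Complex.exp (-(Complex.I * ((k - l : ℤ) : ℂ) * ((x + ψ x : ℝ) : ℂ)))
        = Complex.exp (-(Complex.I * k * ((x + ψ x : ℝ) : ℂ))) *
          (starRingEnd ℂ) (Complex.exp (-(Complex.I * l * ((x + ψ x : ℝ) : ℂ)))) := by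
      rw [← Complex.exp_conj, ← Complex.exp_add]
      congr 1
      simp only [map_neg, map_mul, Complex.conj_I, Complex.conj_ofReal, map_intCast]
      push_cast
      ring
    rw [this, map_mul]
    ring
  apply Complex.ofReal_injective
  rw [← intervalIntegral.integral_ofReal]
  simp only [hpt]
  rw [intervalIntegral.integral_finsetSum]
  · rw [Complex.ofReal_mul, Complex.ofReal_sum, Finset.mul_sum]
    refine Finset.sum_congr rfl fun k hk => ?_
    rw [intervalIntegral.integral_finsetSum]
    · simp only [intervalIntegral.integral_const_mul, char_orth hψ hc hper, sub_eq_zero]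
      simp only [mul_ite, mul_zero]
      rw [Finset.sum_ite_eq, if_pos hk, Complex.mul_conj']
      push_cast
      ring
    · intro l _; apply Continuous.intervalIntegrable; fun_prop
  · intro l _; apply Continuous.intervalIntegrable; fun_prop

/-- Bessel's inequality for the oscillatory integrals with phase `x + ψ(x)`. -/
lemma bessel_like {ψ ψ' : ℝ → ℝ} (hψ : ∀ x, HasDerivAt ψ (ψ' x) x) (hc : Continuous ψ')
    (hb : ∀ x, |ψ' x| ≤ 1 / 2) (hper : ψ (2 * π) = ψ 0) {f : ℝ → ℂ} (hf : Continuous f)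
    (K : Finset ℤ) :
    ∑ k ∈ K, ‖∫ x in (0:ℝ)..(2 * π), f x * Complex.exp (-(Complex.I * k * ((x + ψ x : ℝ) : ℂ)))‖ ^ 2
      ≤ 4 * π * ∫ x in (0:ℝ)..(2 * π), ‖f x‖ ^ 2 := by
  have hψc : Continuous ψ := continuous_iff_continuousAt.2 fun x => (hψ x).continuousAt
  have hπ := Real.pi_pos
  set T : ℤ → ℂ := fun k =>
    ∫ x in (0:ℝ)..(2 * π), f x * Complex.exp (-(Complex.I * k * ((x + ψ x : ℝ) : ℂ))) with hT
  set S : ℝ := ∑ k ∈ K, ‖T k‖ ^ 2 with hS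
  set P : ℝ → ℂ := fun x => ∑ k ∈ K, (starRingEnd ℂ) (T k) *
    Complex.exp (-(Complex.I * k * ((x + ψ x : ℝ) : ℂ))) with hP
  have hPc : Continuous P := by rw [hP]; fun_prop
  have hS0 : 0 ≤ S := Finset.sum_nonneg fun _ _ => sq_nonneg _
  have h1 : (S : ℂ) = ∫ x in (0:ℝ)..(2 * π), f x * P x := by
    have : ∀ x, f x * P x = ∑ k ∈ K, (starRingEnd ℂ) (T k) *
        (f x * Complex.exp (-(Complex.I * k * ((x + ψ x : ℝ) : ℂ)))) := by
      intro x; rw [hP, Finset.mul_sum]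
      exact Finset.sum_congr rfl fun k _ => by ring
    simp only [this]
    rw [intervalIntegral.integral_finsetSum]
    · rw [hS, Complex.ofReal_sum]
      refine Finset.sum_congr rfl fun k _ => ?_
      rw [intervalIntegral.integral_const_mul, Complex.ofReal_pow, ← Complex.conj_mul']
    · intro l _; apply Continuous.intervalIntegrable; fun_prop
  have h2 : S ≤ ∫ x in (0:ℝ)..(2 * π), ‖f x‖ * ‖P x‖ := by
    calc S = ‖(S : ℂ)‖ := by rw [Complex.norm_real, Real.norm_of_nonneg hS0]
      _ ≤ ∫ x in (0:ℝ)..(2 * π), ‖f x * P x‖ := by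
        rw [h1]; exact intervalIntegral.norm_integral_le_integral_norm (by positivity)
      _ = _ := by simp only [norm_mul]
  have h3 : ∫ x in (0:ℝ)..(2 * π), ‖P x‖ ^ 2 ≤ 4 * π * S := by
    have e := char_sum_sq hψ hc hper K (fun k => (starRingEnd ℂ) (T k))
    simp only [RCLike.norm_conj] at e
    have : ∫ x in (0:ℝ)..(2 * π), ‖P x‖ ^ 2 ≤ ∫ x in (0:ℝ)..(2 * π), 2 * (‖P x‖ ^ 2 * (1 + ψ' x)) := by
      apply intervalIntegral.integral_mono_on (by positivity)
        (by apply Continuous.intervalIntegrable; fun_prop)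
        (by apply Continuous.intervalIntegrable; fun_prop)
      intro x _
      have := (abs_le.1 (hb x)).1
      nlinarith [sq_nonneg ‖P x‖]
    rw [intervalIntegral.integral_const_mul, e] at this
    linarith
  have h4 := integral_cs (a := 0) (b := 2 * π) (by positivity) hf.norm hPc.norm
  have hF : 0 ≤ ∫ x in (0:ℝ)..(2 * π), ‖f x‖ ^ 2 :=
    intervalIntegral.integral_nonneg (by positivity) fun _ _ => sq_nonneg _
  have h5 : S ^ 2 ≤ (∫ x in (0:ℝ)..(2 * π), ‖f x‖ ^ 2) * (4 * π * S) := by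
    calc S ^ 2 ≤ _ := pow_le_pow_left₀ hS0 h2 2
      _ ≤ _ := h4
      _ ≤ _ := by gcongr
  rcases hS0.eq_or_lt with h0 | h0
  · rw [← h0]; positivity
  · have : S * S ≤ (4 * π * ∫ x in (0:ℝ)..(2 * π), ‖f x‖ ^ 2) * S := by nlinarith
    exact le_of_mul_le_mul_right this h0

/-- Differentiation under the integral sign for jointly continuous derivatives. -/
lemma hasDerivAt_integral_cont {p p' : ℝ → ℝ → ℂ} (a b : ℝ)
    (hp : ∀ τ, Continuous (p τ)) (hp' : Continuous (Function.uncurry p'))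
    (hd : ∀ τ x, HasDerivAt (fun τ => p τ x) (p' τ x) τ) (τ₀ : ℝ) :
    HasDerivAt (fun τ => ∫ x in a..b, p τ x) (∫ x in a..b, p' τ₀ x) τ₀ := by
  obtain ⟨C, hC⟩ := ((isCompact_closedBall τ₀ 1).prod
    (isCompact_uIcc (a := a) (b := b))).exists_bound_of_continuousOn hp'.continuousOn
  refine (intervalIntegral.hasDerivAt_integral_of_dominated_loc_of_deriv_le
    (F := p) (F' := p') (bound := fun _ => C) (Metric.ball_mem_nhds τ₀ one_pos) ?_ ?_ ?_ ?_ ?_ ?_).2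
  · exact Filter.Eventually.of_forall fun τ => (hp τ).aestronglyMeasurable
  · exact (hp τ₀).intervalIntegrable _ _
  · exact Continuous.aestronglyMeasurable (by fun_prop)
  · refine Filter.Eventually.of_forall fun x hx τ hτ => ?_
    exact hC (τ, x) ⟨Metric.ball_subset_closedBall hτ, Set.uIoc_subset_uIcc hx⟩
  · simp
  · exact Filter.Eventually.of_forall fun x _ τ _ => hd τ x

/-! ### The oscillatory integrals and their dependence on the data -/

/-- The oscillatory integral `∫ A e^{-uA} e^{-ik(x+ψ)} dx`, whose amplitude does not depend on `k`. -/
def Gosc (u : ℝ) (A ψ : ℝ → ℝ) (k : ℤ) : ℂ :=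
  ∫ x in (0:ℝ)..(2 * π), ((A x * Real.exp (-(u * A x)) : ℝ) : ℂ) *
    Complex.exp (-(Complex.I * k * ((x + ψ x : ℝ) : ℂ)))

/-- Lipschitz dependence of `Gosc` on `(A, ψ)`, in `ℓ²` over the frequencies `|k| ≤ κ`: the mean value
inequality along the segment joining the two pairs, combined with `bessel_like`. -/
lemma Gosc_diff {c u κ : ℝ} (hc : 0 < c) (hu : 0 ≤ u) {A₀ A₁ ψ₀ ψ₁ ψ₀' ψ₁' : ℝ → ℝ}
    (hA₀ : Continuous A₀) (hA₁ : Continuous A₁)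
    (bA₀ : ∀ x, |A₀ x - c| ≤ c / 2) (bA₁ : ∀ x, |A₁ x - c| ≤ c / 2)
    (hψ₀ : ∀ x, HasDerivAt ψ₀ (ψ₀' x) x) (hψ₁ : ∀ x, HasDerivAt ψ₁ (ψ₁' x) x)
    (cψ₀ : Continuous ψ₀') (cψ₁ : Continuous ψ₁')
    (bψ₀ : ∀ x, |ψ₀' x| ≤ 1 / 2) (bψ₁ : ∀ x, |ψ₁' x| ≤ 1 / 2)
    (pψ₀ : ψ₀ (2 * π) = ψ₀ 0) (pψ₁ : ψ₁ (2 * π) = ψ₁ 0)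
    (K : Finset ℤ) (hK : ∀ k ∈ K, |(k : ℝ)| ≤ κ) :
    ∑ k ∈ K, ‖Gosc u A₁ ψ₁ k - Gosc u A₀ ψ₀ k‖ ^ 2 ≤
      8 * π * Real.exp (-(u * c)) * ((1 + 2 * c * u) ^ 2 * (∫ x in (0:ℝ)..(2 * π), (A₁ x - A₀ x) ^ 2)
        + 4 * c ^ 2 * κ ^ 2 * ∫ x in (0:ℝ)..(2 * π), (ψ₁ x - ψ₀ x) ^ 2) := by
  have hπ := Real.pi_pos
  have cψ0 : Continuous ψ₀ := continuous_iff_continuousAt.2 fun x => (hψ₀ x).continuousAt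
  have cψ1 : Continuous ψ₁ := continuous_iff_continuousAt.2 fun x => (hψ₁ x).continuousAt
  set At : ℝ → ℝ → ℝ := fun τ x => A₀ x + τ * (A₁ x - A₀ x) with hAt
  set pt : ℝ → ℝ → ℝ := fun τ x => ψ₀ x + τ * (ψ₁ x - ψ₀ x) with hpt
  set f1 : ℝ → ℝ → ℂ := fun τ x =>
    (((A₁ x - A₀ x) * ((1 - u * At τ x) * Real.exp (-(u * At τ x))) : ℝ) : ℂ) with hf1
  set f2 : ℝ → ℝ → ℂ := fun τ x =>
    (((ψ₁ x - ψ₀ x) * (At τ x * Real.exp (-(u * At τ x))) : ℝ) : ℂ) with hf2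
  set E : ℤ → ℝ → ℝ → ℂ := fun k τ x =>
    Complex.exp (-(Complex.I * k * ((x + pt τ x : ℝ) : ℂ))) with hE
  set R : ℝ := 8 * π * Real.exp (-(u * c)) * ((1 + 2 * c * u) ^ 2 *
    (∫ x in (0:ℝ)..(2 * π), (A₁ x - A₀ x) ^ 2)
        + 4 * c ^ 2 * κ ^ 2 * ∫ x in (0:ℝ)..(2 * π), (ψ₁ x - ψ₀ x) ^ 2) with hR
  have hR0 : 0 ≤ R := by
    have h1 : 0 ≤ ∫ x in (0:ℝ)..(2 * π), (A₁ x - A₀ x) ^ 2 :=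
      intervalIntegral.integral_nonneg (by positivity) fun _ _ => sq_nonneg _
    have h2 : 0 ≤ ∫ x in (0:ℝ)..(2 * π), (ψ₁ x - ψ₀ x) ^ 2 :=
      intervalIntegral.integral_nonneg (by positivity) fun _ _ => sq_nonneg _
    positivity
  set D : ℤ → ℂ := fun k => Gosc u A₁ ψ₁ k - Gosc u A₀ ψ₀ k with hD
  set S : ℝ := ∑ k ∈ K, ‖D k‖ ^ 2 with hS
  have hS0 : 0 ≤ S := Finset.sum_nonneg fun _ _ => sq_nonneg _
  -- The `A`-derivative carries no factor `k`, while the `ψ`-derivative carries exactly one.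
  set H' : ℤ → ℝ → ℂ := fun k τ => ∫ x in (0:ℝ)..(2 * π),
    (f1 τ x * E k τ x + (-(Complex.I * k)) * (f2 τ x * E k τ x)) with hH'
  have hder : ∀ k τ, HasDerivAt (fun τ => Gosc u (At τ) (pt τ) k) (H' k τ) τ := by
    intro k τ
    refine hasDerivAt_integral_cont (p := fun τ x => ((At τ x * Real.exp (-(u * At τ x)) : ℝ) : ℂ) *
      Complex.exp (-(Complex.I * k * ((x + pt τ x : ℝ) : ℂ))))
      (p' := fun τ x => f1 τ x * E k τ x + (-(Complex.I * k)) * (f2 τ x * E k τ x)) 0 (2 * π)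
      ?_ ?_ ?_ τ
    · intro τ; simp only [hAt, hpt]; fun_prop
    · simp only [hAt, hpt, hf1, hf2, hE, Function.uncurry_def]; fun_prop
    · intro τ x
      have dA : HasDerivAt (fun τ => At τ x) (A₁ x - A₀ x) τ := by
        simpa [hAt] using ((hasDerivAt_id τ).mul_const (A₁ x - A₀ x)).const_add (A₀ x)
      have dp : HasDerivAt (fun τ => x + pt τ x) (ψ₁ x - ψ₀ x) τ := by
        simpa [hpt] using
          (((hasDerivAt_id τ).mul_const (ψ₁ x - ψ₀ x)).const_add (ψ₀ x)).const_add x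
      have d1 := (dA.mul ((dA.const_mul u).neg.exp)).ofReal_comp
      have d2 := ((dp.ofReal_comp).const_mul (Complex.I * k)).neg.cexp
      refine (d1.mul d2).congr_deriv ?_
      simp only [hf1, hf2, hE, Pi.neg_apply, Pi.mul_apply]
      push_cast
      ring
  have bA : ∀ τ ∈ Set.Icc (0:ℝ) 1, ∀ x, |At τ x - c| ≤ c / 2 := by
    intro τ hτ x
    have : At τ x - c = (1 - τ) * (A₀ x - c) + τ * (A₁ x - c) := by simp only [hAt]; ring
    rw [this]
    calc _ ≤ |(1 - τ) * (A₀ x - c)| + |τ * (A₁ x - c)| := abs_add_le _ _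
      _ = (1 - τ) * |A₀ x - c| + τ * |A₁ x - c| := by
        rw [abs_mul, abs_mul, abs_of_nonneg hτ.1, abs_of_nonneg (by linarith [hτ.2] : 0 ≤ 1 - τ)]
      _ ≤ (1 - τ) * (c / 2) + τ * (c / 2) := by
        have := hτ.1; have h2 : 0 ≤ 1 - τ := by linarith [hτ.2]
        gcongr
        · exact bA₀ x
        · exact bA₁ x
      _ = _ := by ring
  have hexp : ∀ τ ∈ Set.Icc (0:ℝ) 1, ∀ x, Real.exp (-(u * At τ x)) ^ 2 ≤ Real.exp (-(u * c)) := by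
    intro τ hτ x
    rw [← Real.exp_nat_mul]
    apply Real.exp_le_exp.2
    have := (abs_le.1 (bA τ hτ x)).1
    push_cast
    nlinarith
  have hbound : ∀ τ ∈ Set.Icc (0:ℝ) 1, ∑ k ∈ K, ‖H' k τ‖ ^ 2 ≤ R := by
    intro τ hτ
    have dpt : ∀ x, HasDerivAt (pt τ) (ψ₀' x + τ * (ψ₁' x - ψ₀' x)) x := fun x =>
      (hψ₀ x).add (((hψ₁ x).sub (hψ₀ x)).const_mul τ)
    have bpt : ∀ x, |ψ₀' x + τ * (ψ₁' x - ψ₀' x)| ≤ 1 / 2 := by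
      intro x
      have a0 := abs_le.1 (bψ₀ x)
      have a1 := abs_le.1 (bψ₁ x)
      have h2 : 0 ≤ 1 - τ := by linarith [hτ.2]
      rw [abs_le]
      constructor <;> nlinarith [hτ.1, mul_nonneg hτ.1 (sub_nonneg.2 a1.1),
        mul_nonneg hτ.1 (sub_nonneg.2 a1.2), mul_nonneg h2 (sub_nonneg.2 a0.1),
        mul_nonneg h2 (sub_nonneg.2 a0.2)]
    have cAt : Continuous (At τ) := by simp only [hAt]; fun_prop
    have cpt : Continuous (pt τ) := by simp only [hpt]; fun_prop
    have cf1 : Continuous (f1 τ) := by simp only [hf1]; fun_prop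
    have cf2 : Continuous (f2 τ) := by simp only [hf2]; fun_prop
    have b1 := bessel_like dpt (by fun_prop) bpt (by simp only [hpt, pψ₀, pψ₁]) cf1 K
    have b2 := bessel_like dpt (by fun_prop) bpt (by simp only [hpt, pψ₀, pψ₁]) cf2 K
    have n1 : ∫ x in (0:ℝ)..(2 * π), ‖f1 τ x‖ ^ 2 ≤
        Real.exp (-(u * c)) * (1 + 2 * c * u) ^ 2 * ∫ x in (0:ℝ)..(2 * π), (A₁ x - A₀ x) ^ 2 := by
      rw [← intervalIntegral.integral_const_mul]
      apply intervalIntegral.integral_mono_on (by positivity)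
        (by apply Continuous.intervalIntegrable; fun_prop)
        (by apply Continuous.intervalIntegrable; fun_prop)
      intro x _
      have q : (1 - u * At τ x) ^ 2 ≤ (1 + 2 * c * u) ^ 2 := by
        have hh := abs_le.1 (bA τ hτ x)
        have : 0 ≤ u * At τ x := mul_nonneg hu (by linarith)
        have : u * At τ x ≤ u * (2 * c) := mul_le_mul_of_nonneg_left (by linarith) hu
        apply sq_le_sq'
        · nlinarith
        · nlinarith
      simp only [hf1, Complex.norm_real, Real.norm_eq_abs, sq_abs]
      rw [mul_pow, mul_pow]
      calc _ ≤ (A₁ x - A₀ x) ^ 2 * ((1 + 2 * c * u) ^ 2 * Real.exp (-(u * c))) := by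
            gcongr; exact hexp τ hτ x
        _ = _ := by ring
    have n2 : ∫ x in (0:ℝ)..(2 * π), ‖f2 τ x‖ ^ 2 ≤
        Real.exp (-(u * c)) * (4 * c ^ 2) * ∫ x in (0:ℝ)..(2 * π), (ψ₁ x - ψ₀ x) ^ 2 := by
      rw [← intervalIntegral.integral_const_mul]
      apply intervalIntegral.integral_mono_on (by positivity)
        (by apply Continuous.intervalIntegrable; fun_prop)
        (by apply Continuous.intervalIntegrable; fun_prop)
      intro x _
      have q : (At τ x) ^ 2 ≤ 4 * c ^ 2 := by
        have hh := abs_le.1 (bA τ hτ x)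
        nlinarith
      simp only [hf2, Complex.norm_real, Real.norm_eq_abs, sq_abs]
      rw [mul_pow, mul_pow]
      calc _ ≤ (ψ₁ x - ψ₀ x) ^ 2 * ((4 * c ^ 2) * Real.exp (-(u * c))) := by
            gcongr; exact hexp τ hτ x
        _ = _ := by ring
    have hterm : ∀ k ∈ K, ‖H' k τ‖ ^ 2 ≤
        2 * ‖∫ x in (0:ℝ)..(2 * π), f1 τ x * E k τ x‖ ^ 2
        + 2 * κ ^ 2 * ‖∫ x in (0:ℝ)..(2 * π), f2 τ x * E k τ x‖ ^ 2 := by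
      intro k hk
      have cE : Continuous (E k τ) := by simp only [hE]; fun_prop
      simp only [hH']
      rw [intervalIntegral.integral_add (by apply Continuous.intervalIntegrable; fun_prop)
        (by apply Continuous.intervalIntegrable; fun_prop), intervalIntegral.integral_const_mul]
      set X := ∫ x in (0:ℝ)..(2 * π), f1 τ x * E k τ x
      set Y := ∫ x in (0:ℝ)..(2 * π), f2 τ x * E k τ x
      have h1 : ‖X + -(Complex.I * k) * Y‖ ≤ ‖X‖ + κ * ‖Y‖ := by
        refine (norm_add_le _ _).trans ?_
        rw [norm_mul, norm_neg, norm_mul, Complex.norm_I, one_mul, Complex.norm_intCast]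
        gcongr
        exact hK k hk
      have h2 : ‖X + -(Complex.I * k) * Y‖ ^ 2 ≤ (‖X‖ + κ * ‖Y‖) ^ 2 :=
        pow_le_pow_left₀ (norm_nonneg _) h1 2
      nlinarith [sq_nonneg (‖X‖ - κ * ‖Y‖)]
    calc _ ≤ _ := Finset.sum_le_sum hterm
      _ = 2 * ∑ k ∈ K, ‖∫ x in (0:ℝ)..(2 * π), f1 τ x * E k τ x‖ ^ 2
        + 2 * κ ^ 2 * ∑ k ∈ K, ‖∫ x in (0:ℝ)..(2 * π), f2 τ x * E k τ x‖ ^ 2 := by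
        rw [Finset.sum_add_distrib, Finset.mul_sum, Finset.mul_sum]
      _ ≤ 2 * (4 * π * (Real.exp (-(u * c)) * (1 + 2 * c * u) ^ 2 *
            ∫ x in (0:ℝ)..(2 * π), (A₁ x - A₀ x) ^ 2))
          + 2 * κ ^ 2 * (4 * π * (Real.exp (-(u * c)) * (4 * c ^ 2) *
            ∫ x in (0:ℝ)..(2 * π), (ψ₁ x - ψ₀ x) ^ 2)) := by
        gcongr
        · exact b1.trans (by gcongr)
        · exact b2.trans (by gcongr)
      _ = R := by rw [hR]; ring
  -- Testing the differences `D k` against their conjugates turns `S` into the increment of one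
  -- scalar function, to which the mean value inequality applies.
  set h : ℝ → ℂ := fun τ => ∑ k ∈ K, (starRingEnd ℂ) (D k) * Gosc u (At τ) (pt τ) k with hh
  have hhd : ∀ τ, HasDerivAt h (∑ k ∈ K, (starRingEnd ℂ) (D k) * H' k τ) τ := fun τ =>
    HasDerivAt.fun_sum fun k _ => (hder k τ).const_mul _
  have h10 : h 1 - h 0 = (S : ℂ) := by
    have e1 : At 1 = A₁ := by ext x; simp [hAt]
    have e0 : At 0 = A₀ := by ext x; simp [hAt]
    have p1 : pt 1 = ψ₁ := by ext x; simp [hpt]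
    have p0 : pt 0 = ψ₀ := by ext x; simp [hpt]
    simp only [hh, e1, e0, p1, p0]
    rw [← Finset.sum_sub_distrib, hS, Complex.ofReal_sum]
    refine Finset.sum_congr rfl fun k _ => ?_
    rw [← mul_sub, Complex.ofReal_pow, ← Complex.conj_mul']
  have hmv : ‖h 1 - h 0‖ ≤ Real.sqrt S * Real.sqrt R := by
    refine norm_image_sub_le_of_norm_deriv_le_segment_01'
      (fun τ _ => (hhd τ).hasDerivWithinAt) ?_
    intro τ hτ
    calc _ ≤ ∑ k ∈ K, ‖D k‖ * ‖H' k τ‖ := by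
          refine (norm_sum_le _ _).trans (Finset.sum_le_sum fun k _ => ?_)
          rw [norm_mul, RCLike.norm_conj]
      _ ≤ Real.sqrt S * Real.sqrt (∑ k ∈ K, ‖H' k τ‖ ^ 2) :=
        Real.sum_mul_le_sqrt_mul_sqrt _ _ _
      _ ≤ _ := by
        gcongr
        exact hbound τ ⟨hτ.1, hτ.2.le⟩
  rw [h10, Complex.norm_real, Real.norm_of_nonneg hS0, ← Real.sqrt_mul hS0] at hmv
  have := pow_le_pow_left₀ hS0 hmv 2
  rw [Real.sq_sqrt (by positivity)] at this
  rcases hS0.eq_or_lt with h0 | h0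
  · rw [← h0]; exact hR0
  · exact le_of_mul_le_mul_left (by nlinarith) h0

/-! ### Trigonometric polynomials in complex strips -/

/-- The trigonometric polynomial `∑_{j ∈ F} α_j e^{ijz}` of a complex variable. -/
def TP (α : ℤ → ℂ) (F : Finset ℤ) (z : ℂ) : ℂ := ∑ j ∈ F, α j * Complex.exp (Complex.I * j * z)

/-- The real part of a trigonometric polynomial on the real line. -/
def rTP (α : ℤ → ℂ) (F : Finset ℤ) (x : ℝ) : ℝ := (TP α F x).re

/-- The derivative of `rTP`. -/
def rTP' (α : ℤ → ℂ) (F : Finset ℤ) (x : ℝ) : ℝ :=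
  (TP (fun j => Complex.I * j * α j) F x).re

lemma TP_differentiable (α : ℤ → ℂ) (F : Finset ℤ) : Differentiable ℂ (TP α F) := by
  unfold TP; fun_prop

lemma TP_periodic (α : ℤ → ℂ) (F : Finset ℤ) (z : ℂ) : TP α F (z + 2 * π) = TP α F z := by
  unfold TP
  refine Finset.sum_congr rfl fun j _ => ?_
  congr 1
  rw [Complex.exp_eq_exp_iff_exists_int]
  exact ⟨j, by ring⟩

lemma TP_real {α : ℤ → ℂ} (hα : ∀ j, (starRingEnd ℂ) (α j) = α (-j)) {F : Finset ℤ}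
    (hF : ∀ j ∈ F, -j ∈ F) (x : ℝ) : TP α F x = (rTP α F x : ℂ) := by
  symm
  apply Complex.conj_eq_iff_re.1
  unfold TP
  rw [map_sum]
  refine Finset.sum_bij' (fun j _ => -j) (fun j _ => -j) hF hF (by simp) (by simp) ?_
  intro j _
  rw [map_mul, hα, ← Complex.exp_conj]
  simp

lemma rTP_continuous (α : ℤ → ℂ) (F : Finset ℤ) : Continuous (rTP α F) := by
  unfold rTP TP; fun_prop

lemma rTP'_continuous (α : ℤ → ℂ) (F : Finset ℤ) : Continuous (rTP' α F) := by
  unfold rTP' TP; fun_prop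

lemma rTP_hasDerivAt (α : ℤ → ℂ) (F : Finset ℤ) (x : ℝ) :
    HasDerivAt (rTP α F) (rTP' α F x) x := by
  have h : HasDerivAt (fun x : ℝ => TP α F x) (TP (fun j => Complex.I * j * α j) F x) x := by
    unfold TP
    apply HasDerivAt.fun_sum
    intro j _
    have h1 : HasDerivAt (fun x : ℝ => Complex.I * j * (x : ℂ)) (Complex.I * j * ((1:ℝ) : ℂ)) x :=
      ((hasDerivAt_id x).ofReal_comp).const_mul _
    refine (h1.cexp.const_mul (α j)).congr_deriv ?_
    push_cast; ring
  have := Complex.reCLM.hasFDerivAt.comp_hasDerivAt x h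
  exact this

lemma rTP_periodic (α : ℤ → ℂ) (F : Finset ℤ) : rTP α F (2 * π) = rTP α F 0 := by
  unfold rTP
  have := TP_periodic α F 0
  simp only [zero_add] at this
  push_cast
  rw [this]

lemma norm_TP_real_le (α : ℤ → ℂ) (F : Finset ℤ) (x : ℝ) : ‖TP α F x‖ ≤ ∑ j ∈ F, ‖α j‖ := by
  refine (norm_sum_le _ _).trans (Finset.sum_le_sum fun j _ => ?_)
  rw [norm_mul, Complex.norm_exp]
  simp

lemma one_le_jb (j : ℤ) : 1 ≤ jb j := le_max_left _ _

lemma jb_pos (j : ℤ) : 0 < jb j := zero_lt_one.trans_le (one_le_jb j)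

lemma abs_le_jb (j : ℤ) : |(j : ℝ)| ≤ jb j := le_max_right _ _

/-- The weighted coefficient sum which controls `α` in `C¹` in a thin complex strip. -/
def wsum (α : ℤ → ℂ) (F : Finset ℤ) : ℝ := ∑ j ∈ F, 2 * jb j ^ 2 * ‖α j‖

lemma abs_rTP_le (α : ℤ → ℂ) (F : Finset ℤ) (x : ℝ) : |rTP α F x| ≤ wsum α F := by
  refine (Complex.abs_re_le_norm _).trans ((norm_TP_real_le α F x).trans ?_)
  refine Finset.sum_le_sum fun j _ => ?_
  nlinarith [one_le_jb j, norm_nonneg (α j), mul_nonneg (norm_nonneg (α j)) (sub_nonneg.2 (one_le_pow₀ (one_le_jb j) : 1 ≤ jb j ^ 2))]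

lemma abs_rTP'_le (α : ℤ → ℂ) (F : Finset ℤ) (x : ℝ) : |rTP' α F x| ≤ wsum α F := by
  refine (Complex.abs_re_le_norm _).trans ((norm_TP_real_le _ F x).trans ?_)
  refine Finset.sum_le_sum fun j _ => ?_
  rw [norm_mul, norm_mul, Complex.norm_I, one_mul, Complex.norm_intCast]
  gcongr
  nlinarith [one_le_jb j, abs_le_jb j]

lemma integral_rTP_sq_le (α : ℤ → ℂ) (F : Finset ℤ) :
    ∫ x in (0:ℝ)..(2 * π), rTP α F x ^ 2 ≤ 2 * π * ∑ j ∈ F, ‖α j‖ ^ 2 := by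
  have hπ := Real.pi_pos
  have e := char_sum_sq (ψ := fun _ => 0) (ψ' := fun _ => 0) (fun x => hasDerivAt_const x 0)
    continuous_const rfl F (fun j => (starRingEnd ℂ) (α j))
  simp only [RCLike.norm_conj, add_zero, mul_one] at e
  rw [← e]
  apply intervalIntegral.integral_mono_on (by positivity)
    (by have := rTP_continuous α F; apply Continuous.intervalIntegrable; fun_prop)
    (by apply Continuous.intervalIntegrable; fun_prop)
  intro x _
  have : ‖∑ k ∈ F, (starRingEnd ℂ) (α k) * Complex.exp (-(Complex.I * k * (x:ℂ)))‖ = ‖TP α F x‖ := by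
    rw [← RCLike.norm_conj (TP α F x), TP, map_sum]
    congr 1
    refine Finset.sum_congr rfl fun j _ => ?_
    rw [map_mul, ← Complex.exp_conj]
    simp
  rw [this, ← sq_abs]
  gcongr
  exact Complex.abs_re_le_norm _

/-- Contour shift for entire periodic functions. -/
lemma integral_shift {h : ℂ → ℂ} (hd : Differentiable ℂ h) (hp : ∀ z, h (z + 2 * π) = h z) (y : ℝ) :
    ∫ x in (0:ℝ)..(2 * π), h x = ∫ x in (0:ℝ)..(2 * π), h (x - y * Complex.I) := by
  have := Complex.integral_boundary_rect_eq_zero_of_differentiableOn h (-(y * Complex.I))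
    ((2 * π : ℝ) : ℂ) hd.differentiableOn
  simp at this
  have e : ∀ t : ℝ, h (2 * π + t * Complex.I) = h (t * Complex.I) := by
    intro t; rw [add_comm, hp]
  simp only [e] at this
  have e2 : ∀ x : ℝ, h (x + -(y * Complex.I)) = h (x - y * Complex.I) := fun x => rfl
  simp only [e2] at this
  linear_combination -this

lemma abs_exp_sub_one_le' (t : ℝ) : |Real.exp t - 1| ≤ |t| * Real.exp |t| := by
  rcases le_total 0 t with h | h
  · rw [abs_of_nonneg h, abs_of_nonneg (by linarith [Real.add_one_le_exp t])]
    have := Real.add_one_le_exp (-t)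
    have h2 : Real.exp t * Real.exp (-t) = 1 := by rw [← Real.exp_add]; simp
    nlinarith [Real.exp_pos t]
  · rw [abs_of_nonpos h, abs_of_nonpos (by linarith [Real.exp_le_one_iff.2 h])]
    have h1 := Real.add_one_le_exp t
    have h2 : 1 ≤ Real.exp (-t) := Real.one_le_exp (by linarith)
    nlinarith

/-- With strip width `y = log L / L` the exponential growth at frequencies `|j| ≤ L` is at most
linear in `j`, by Bernoulli's inequality. -/
lemma exp_strip_le {L : ℕ} (hL : 1 ≤ L) {j : ℤ} (hj : |(j : ℝ)| ≤ L) :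
    Real.exp (|(j : ℝ)| * (Real.log L / L)) ≤ 2 * jb j := by
  have hL' : (1:ℝ) ≤ L := by exact_mod_cast hL
  have hL0 : (0:ℝ) < L := by linarith
  have h1 : Real.exp (|(j : ℝ)| * (Real.log L / L)) = (1 + ((L:ℝ) - 1)) ^ (|(j : ℝ)| / L) := by
    rw [Real.rpow_def_of_pos (by linarith)]
    congr 1
    rw [show 1 + ((L:ℝ) - 1) = L by ring]
    ring
  rw [h1]
  refine (rpow_one_add_le_one_add_mul_self (by linarith) (by positivity)
    ((div_le_one hL0).2 hj)).trans ?_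
  have : |(j : ℝ)| / L * (L - 1) ≤ |(j : ℝ)| := by
    rw [div_mul_eq_mul_div, div_le_iff₀ hL0]
    nlinarith [abs_nonneg (j : ℝ)]
  linarith [one_le_jb j, abs_le_jb j]

lemma norm_exp_shift (j : ℤ) (x y : ℝ) :
    ‖Complex.exp (Complex.I * j * ((x : ℂ) - y * Complex.I))‖ = Real.exp (j * y) := by
  rw [Complex.norm_exp]
  simp

lemma norm_TP_strip_le {α : ℤ → ℂ} {F : Finset ℤ} {L : ℕ} (hL : 1 ≤ L)
    (hF : ∀ j ∈ F, |(j : ℝ)| ≤ L) (x : ℝ) :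
    ‖TP α F ((x : ℂ) - (Real.log L / L : ℝ) * Complex.I)‖ ≤ wsum α F := by
  refine (norm_sum_le _ _).trans (Finset.sum_le_sum fun j hj => ?_)
  have hL' : (1:ℝ) ≤ L := by exact_mod_cast hL
  have hy : 0 ≤ Real.log L / L := div_nonneg (Real.log_nonneg hL') (by linarith)
  rw [norm_mul, norm_exp_shift]
  have h1 : Real.exp (j * (Real.log L / L)) ≤ 2 * jb j ^ 2 := by
    refine (Real.exp_le_exp.2 (mul_le_mul_of_nonneg_right (le_abs_self _) hy)).trans
      ((exp_strip_le hL (hF j hj)).trans ?_)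
    nlinarith [one_le_jb j]
  nlinarith [norm_nonneg (α j)]

lemma norm_TP_strip_sub_le {α : ℤ → ℂ} {F : Finset ℤ} {L : ℕ} (hL : 1 ≤ L)
    (hF : ∀ j ∈ F, |(j : ℝ)| ≤ L) (x : ℝ) :
    ‖TP α F ((x : ℂ) - (Real.log L / L : ℝ) * Complex.I) - TP α F x‖
      ≤ (Real.log L / L) * wsum α F := by
  have hL' : (1:ℝ) ≤ L := by exact_mod_cast hL
  set y : ℝ := Real.log L / L with hy'
  have hy : 0 ≤ y := div_nonneg (Real.log_nonneg hL') (by linarith)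
  rw [TP, TP, ← Finset.sum_sub_distrib, wsum, Finset.mul_sum]
  refine (norm_sum_le _ _).trans (Finset.sum_le_sum fun j hj => ?_)
  have e : Complex.exp (Complex.I * j * ((x : ℂ) - y * Complex.I))
      = Complex.exp (Complex.I * j * x) * ((Real.exp (j * y) : ℝ) : ℂ) := by
    rw [Complex.ofReal_exp, ← Complex.exp_add]
    congr 1
    push_cast
    linear_combination (-(j:ℂ) * y) * Complex.I_sq
  rw [e]
  have e2 : α j * (Complex.exp (Complex.I * j * x) * ((Real.exp (j * y) : ℝ) : ℂ)) -
      α j * Complex.exp (Complex.I * j * x)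
      = α j * Complex.exp (Complex.I * j * x) * ((Real.exp (j * y) - 1 : ℝ) : ℂ) := by
    push_cast; ring
  have e3 : ‖Complex.exp (Complex.I * j * x)‖ = 1 := by
    rw [Complex.norm_exp]; simp
  rw [e2, norm_mul, norm_mul, e3, mul_one, Complex.norm_real, Real.norm_eq_abs]
  have h1 := abs_exp_sub_one_le' (j * y)
  rw [abs_mul, abs_of_nonneg hy] at h1
  have h2 := exp_strip_le hL (hF j hj)
  rw [← hy'] at h2
  have h3 : |Real.exp (j * y) - 1| ≤ y * (2 * jb j ^ 2) := by
    calc _ ≤ _ := h1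
      _ ≤ jb j * y * (2 * jb j) := by
        have := abs_le_jb j
        have := jb_pos j
        gcongr
      _ = _ := by ring
  calc _ ≤ ‖α j‖ * (y * (2 * jb j ^ 2)) := by gcongr
    _ = _ := by ring

/-- Non-stationary phase for low-frequency data: shifting the contour gains a large power of `L`. -/
lemma Gosc_low {c u : ℝ} (hc : 0 < c) (hu : 0 ≤ u) {α γ : ℤ → ℂ} {F : Finset ℤ}
    (hα : ∀ j, (starRingEnd ℂ) (α j) = α (-j)) (hγ : ∀ j, (starRingEnd ℂ) (γ j) = γ (-j))
    (hF : ∀ j ∈ F, -j ∈ F) {L : ℕ} (hL : 1 ≤ L) (hFL : ∀ j ∈ F, |(j : ℝ)| ≤ L)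
    (sα : wsum α F ≤ c / 2) (sγ : wsum γ F ≤ 1 / 2) {k : ℤ} (hk : 0 ≤ k) :
    ‖Gosc u (fun x => c + rTP α F x) (rTP γ F) k‖ ≤
      4 * π * c * Real.exp (-(u * c / 2)) * Real.exp (-(k * (Real.log L / L) / 2)) := by
  have hπ := Real.pi_pos
  have hL' : (1:ℝ) ≤ L := by exact_mod_cast hL
  set y : ℝ := Real.log L / L with hy'
  have hy : 0 ≤ y := div_nonneg (Real.log_nonneg hL') (by linarith)
  have hk' : (0:ℝ) ≤ k := by exact_mod_cast hk
  set h : ℂ → ℂ := fun z => (c + TP α F z) * Complex.exp (-(u * (c + TP α F z))) *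
    Complex.exp (-(Complex.I * k * (z + TP γ F z))) with hh
  have dα := TP_differentiable α F
  have dγ := TP_differentiable γ F
  have e : Gosc u (fun x => c + rTP α F x) (rTP γ F) k = ∫ x in (0:ℝ)..(2 * π), h x := by
    unfold Gosc
    congr 1
    ext x
    simp only [hh, TP_real hα hF, TP_real hγ hF]
    push_cast
    ring
  rw [e, integral_shift (by simp only [hh]; fun_prop) ?_ y]
  · have : ∀ x ∈ Set.uIoc (0:ℝ) (2 * π), ‖h ((x : ℂ) - y * Complex.I)‖ ≤
        2 * c * Real.exp (-(u * c / 2)) * Real.exp (-(k * y / 2)) := by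
      intro x _
      have b1 := norm_TP_strip_le (α := α) hL hFL x
      have b2 := norm_TP_strip_sub_le (α := γ) hL hFL x
      rw [← hy'] at b1 b2
      rw [TP_real hγ hF] at b2
      simp only [hh]
      set T := TP α F ((x : ℂ) - y * Complex.I)
      set V := TP γ F ((x : ℂ) - y * Complex.I)
      have hT : ‖T‖ ≤ c / 2 := b1.trans sα
      have hTre := (abs_le.1 ((Complex.abs_re_le_norm T).trans hT)).1
      have hV : V.im ≤ y / 2 := by
        have h1 := (le_abs_self _).trans ((Complex.abs_im_le_norm _).trans b2)
        simp only [Complex.sub_im, Complex.ofReal_im, sub_zero] at h1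
        nlinarith
      rw [norm_mul, norm_mul, Complex.norm_exp, Complex.norm_exp]
      have n1 : ‖(c : ℂ) + T‖ ≤ 2 * c := by
        refine (norm_add_le _ _).trans ?_
        rw [Complex.norm_real, Real.norm_of_nonneg hc.le]
        linarith
      have n2 : (-((u : ℂ) * (c + T))).re ≤ -(u * c / 2) := by
        simp
        nlinarith
      have n3 : (-(Complex.I * k * ((x : ℂ) - y * Complex.I + V))).re ≤ -(k * y / 2) := by
        simp
        nlinarith
      gcongr
    refine (intervalIntegral.norm_integral_le_of_norm_le_const this).trans (le_of_eq ?_)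
    rw [sub_zero, abs_of_pos (by positivity)]
    ring
  · intro z
    simp only [hh, TP_periodic]
    congr 1
    rw [Complex.exp_eq_exp_iff_exists_int]
    exact ⟨-k, by push_cast; ring⟩

/-! ### The dyadic block estimate for the oscillatory integrals -/

lemma rTP_filter_sub (α : ℤ → ℂ) (F : Finset ℤ) (q : ℤ → Prop) [DecidablePred q] (x : ℝ) :
    rTP α F x - rTP α (F.filter q) x = rTP α (F.filter fun j => ¬ q j) x := by
  unfold rTP TP
  rw [← Finset.sum_filter_add_sum_filter_not F q, Complex.add_re]
  ring

lemma wsum_filter_le (α : ℤ → ℂ) (F : Finset ℤ) (q : ℤ → Prop) [DecidablePred q] :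
    wsum α (F.filter q) ≤ wsum α F :=
  Finset.sum_le_sum_of_subset_of_nonneg (Finset.filter_subset _ _) fun j _ _ => by positivity

/-- For `L = 2^{n-m-1}` and `k ≥ 2^n` the contour shift by `log L / L` gains `L^{-k / (2L)}`, which
is at most `L^{-m}` as `k ≥ 2 m L` when `n > m`. -/
lemma strip_decay {m n : ℕ} {k : ℤ} (hk : (2:ℤ) ^ n ≤ k) :
    Real.exp (-(k * (Real.log ((2 ^ (n - (m + 1)) : ℕ) : ℝ) / ((2 ^ (n - (m + 1)) : ℕ) : ℝ)) / 2)) ≤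
      2 ^ ((m + 1) * m) / 2 ^ (n * m) := by
  have hk' : (2:ℝ) ^ n ≤ k := by exact_mod_cast hk
  rcases le_total n (m + 1) with h | h
  · rw [Nat.sub_eq_zero_of_le h]
    simp only [pow_zero, Nat.cast_one, Real.log_one, zero_div, mul_zero, neg_zero, Real.exp_zero]
    rw [le_div_iff₀ (by positivity), one_mul]
    exact pow_le_pow_right₀ (by norm_num) (Nat.mul_le_mul_right _ h)
  · set q := n - (m + 1) with hq
    have hn : n = q + (m + 1) := by omega
    have e : (2:ℝ) ^ ((m + 1) * m) / 2 ^ (n * m) = Real.exp (-(m * Real.log ((2 ^ q : ℕ) : ℝ))) := by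
      rw [Real.exp_neg, Real.exp_nat_mul, Real.exp_log (by positivity), hn]
      push_cast
      rw [← pow_mul, add_mul, pow_add]
      field_simp
      ring
    rw [e]
    apply Real.exp_le_exp.2
    have hl : 0 ≤ Real.log ((2 ^ q : ℕ) : ℝ) := Real.log_natCast_nonneg _
    have h2 : (2:ℝ) * m ≤ k / ((2 ^ q : ℕ) : ℝ) := by
      rw [le_div_iff₀ (by positivity)]
      have : (m:ℝ) ≤ 2 ^ m := by exact_mod_cast (Nat.lt_two_pow_self (n := m)).le
      calc (2:ℝ) * m * ((2 ^ q : ℕ) : ℝ) ≤ 2 * 2 ^ m * 2 ^ q := by push_cast; gcongr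
        _ = 2 ^ n := by rw [hn, pow_add, pow_succ]; ring
        _ ≤ k := hk'
    have : (k:ℝ) * (Real.log ((2 ^ q : ℕ) : ℝ) / ((2 ^ q : ℕ) : ℝ)) / 2
        = (k / ((2 ^ q : ℕ) : ℝ)) * Real.log ((2 ^ q : ℕ) : ℝ) / 2 := by ring
    rw [this]
    nlinarith

/-- The quantity which controls the dyadic block `2^n ≤ k < 2^{n+1}`: a rapidly decaying term from
the low frequencies of the data, and the `L²` mass of the high frequencies. -/
def Qb (m n : ℕ) (w : ℤ → ℝ) (F : Finset ℤ) : ℝ :=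
  2 ^ n / 4 ^ (n * m) +
    4 ^ n * ∑ j ∈ F.filter (fun j : ℤ => ¬ |(j : ℝ)| ≤ ((2 ^ (n - (m + 1)) : ℕ) : ℝ)), w j

lemma Qb_nonneg (m n : ℕ) {w : ℤ → ℝ} (hw : ∀ j, 0 ≤ w j) (F : Finset ℤ) : 0 ≤ Qb m n w F := by
  have : 0 ≤ ∑ j ∈ F.filter (fun j : ℤ => ¬ |(j : ℝ)| ≤ ((2 ^ (n - (m + 1)) : ℕ) : ℝ)), w j :=
    Finset.sum_nonneg fun j _ => hw j
  unfold Qb; positivity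

lemma card_block {n : ℕ} {K : Finset ℤ} (hK : ∀ k ∈ K, (2:ℤ) ^ n ≤ k ∧ k < 2 ^ (n + 1)) :
    (K.card : ℝ) ≤ 2 ^ n := by
  have h1 : K ⊆ Finset.Ico ((2:ℤ) ^ n) (2 ^ (n + 1)) := fun k hk => Finset.mem_Ico.2 (hK k hk)
  have h2 := Finset.card_le_card h1
  rw [Int.card_Ico, pow_succ, show (2:ℤ) ^ n * 2 - 2 ^ n = ((2 ^ n : ℕ) : ℤ) by push_cast; ring,
    Int.toNat_natCast] at h2
  exact_mod_cast h2

/-- The dyadic block estimate, by splitting the data at frequency `2^{n-m-1}`. -/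
lemma Gosc_block {c : ℝ} (hc : 0 < c) (m : ℕ) : ∃ C : ℝ, 0 < C ∧
    ∀ (α γ : ℤ → ℂ) (F : Finset ℤ), (∀ j, (starRingEnd ℂ) (α j) = α (-j)) →
    (∀ j, (starRingEnd ℂ) (γ j) = γ (-j)) → (∀ j ∈ F, -j ∈ F) →
    wsum α F ≤ c / 2 → wsum γ F ≤ 1 / 2 →
    ∀ (n : ℕ) (K : Finset ℤ), (∀ k ∈ K, (2:ℤ) ^ n ≤ k ∧ k < 2 ^ (n + 1)) → ∀ u : ℝ, 0 ≤ u →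
    ∑ k ∈ K, ‖Gosc u (fun x => c + rTP α F x) (rTP γ F) k‖ ^ 2 ≤
      C * Qb m n (fun j => ‖α j‖ ^ 2 + ‖γ j‖ ^ 2) F * ((1 + u) ^ 2 * Real.exp (-(u * c))) := by
  have hπ := Real.pi_pos
  refine ⟨32 * π ^ 2 * c ^ 2 * 4 ^ ((m + 1) * m) + 32 * π ^ 2 * ((1 + 2 * c) ^ 2 + 16 * c ^ 2),
    by positivity, ?_⟩
  intro α γ F hα hγ hF sα sγ n K hK u hu
  set L : ℕ := 2 ^ (n - (m + 1)) with hL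
  have hL1 : 1 ≤ L := Nat.one_le_two_pow
  set q : ℤ → Prop := fun j => |(j : ℝ)| ≤ (L : ℝ) with hq
  set G := F.filter q with hG
  set B := F.filter (fun j => ¬ q j) with hB
  have hGs : ∀ j ∈ G, -j ∈ G := by
    intro j hj
    simp only [hG, hq, Finset.mem_filter] at hj ⊢
    exact ⟨hF j hj.1, by simpa using hj.2⟩
  have hGL : ∀ j ∈ G, |(j : ℝ)| ≤ (L : ℝ) := fun j hj => (Finset.mem_filter.1 hj).2
  have sαG : wsum α G ≤ c / 2 := (wsum_filter_le α F q).trans sα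
  have sγG : wsum γ G ≤ 1 / 2 := (wsum_filter_le γ F q).trans sγ
  have cα := rTP_continuous α
  have hk0 : ∀ k ∈ K, (0:ℝ) ≤ k := fun k hk => by
    have := (hK k hk).1
    exact_mod_cast (le_trans (by positivity) this)
  have hdiff := Gosc_diff (κ := 2 * 2 ^ n) hc hu (A₀ := fun x => c + rTP α G x)
    (A₁ := fun x => c + rTP α F x) (by fun_prop) (by fun_prop)
    (fun x => by simpa using (abs_rTP_le α G x).trans sαG)
    (fun x => by simpa using (abs_rTP_le α F x).trans sα)
    (rTP_hasDerivAt γ G) (rTP_hasDerivAt γ F) (rTP'_continuous γ G) (rTP'_continuous γ F)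
    (fun x => (abs_rTP'_le γ G x).trans sγG) (fun x => (abs_rTP'_le γ F x).trans sγ)
    (rTP_periodic γ G) (rTP_periodic γ F) K (fun k hk => by
      rw [abs_of_nonneg (hk0 k hk)]
      have := (hK k hk).2
      rw [pow_succ] at this
      have h2 : (k:ℝ) < 2 ^ n * 2 := by exact_mod_cast this
      linarith)
  have i1 : ∫ x in (0:ℝ)..(2 * π), ((c + rTP α F x) - (c + rTP α G x)) ^ 2
      ≤ 2 * π * ∑ j ∈ B, ‖α j‖ ^ 2 := by
    have : ∀ x, (c + rTP α F x) - (c + rTP α G x) = rTP α B x := fun x => by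
      rw [hB, ← rTP_filter_sub]; ring
    simp only [this]
    exact integral_rTP_sq_le α B
  have i2 : ∫ x in (0:ℝ)..(2 * π), (rTP γ F x - rTP γ G x) ^ 2 ≤ 2 * π * ∑ j ∈ B, ‖γ j‖ ^ 2 := by
    have : ∀ x, rTP γ F x - rTP γ G x = rTP γ B x := fun x => by
      rw [hB, ← rTP_filter_sub]
    simp only [this]
    exact integral_rTP_sq_le γ B
  have hlow : ∀ k ∈ K, ‖Gosc u (fun x => c + rTP α G x) (rTP γ G) k‖ ^ 2 ≤
      16 * π ^ 2 * c ^ 2 * Real.exp (-(u * c)) * (4 ^ ((m + 1) * m) / 4 ^ (n * m)) := by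
    intro k hk
    have h1 := Gosc_low hc hu hα hγ hGs hL1 hGL sαG sγG (k := k) (by exact_mod_cast hk0 k hk)
    have h2 := strip_decay (m := m) (hK k hk).1
    have h3 : ‖Gosc u (fun x => c + rTP α G x) (rTP γ G) k‖ ≤
        4 * π * c * Real.exp (-(u * c / 2)) * (2 ^ ((m + 1) * m) / 2 ^ (n * m)) :=
      h1.trans (by gcongr)
    refine (pow_le_pow_left₀ (norm_nonneg _) h3 2).trans (le_of_eq ?_)
    have e1 : Real.exp (-(u * c)) = Real.exp (-(u * c / 2)) ^ 2 := by
      rw [← Real.exp_nat_mul]; congr 1; push_cast; ring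
    have e4 : (4:ℝ) = 2 ^ 2 := by norm_num
    rw [e1, e4, ← pow_mul, ← pow_mul, mul_comm 2 ((m + 1) * m), mul_comm 2 (n * m), pow_mul,
      pow_mul 2 (n * m)]
    ring
  have hB0 : 0 ≤ ∑ j ∈ B, ‖α j‖ ^ 2 := Finset.sum_nonneg fun _ _ => by positivity
  have hB1 : 0 ≤ ∑ j ∈ B, ‖γ j‖ ^ 2 := Finset.sum_nonneg fun _ _ => by positivity
  have hQ : Qb m n (fun j => ‖α j‖ ^ 2 + ‖γ j‖ ^ 2) F =
      2 ^ n / 4 ^ (n * m) + 4 ^ n * (∑ j ∈ B, ‖α j‖ ^ 2 + ∑ j ∈ B, ‖γ j‖ ^ 2) := by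
    rw [Qb, Finset.sum_add_distrib]
  rw [hQ]
  set X := ∑ j ∈ B, ‖α j‖ ^ 2
  set Y := ∑ j ∈ B, ‖γ j‖ ^ 2
  have hu1 : (1:ℝ) ≤ (1 + u) ^ 2 := one_le_pow₀ (by linarith)
  have h4 : (1:ℝ) ≤ 4 ^ n := one_le_pow₀ (by norm_num)
  have hcu : (1 + 2 * c * u) ^ 2 ≤ (1 + 2 * c) ^ 2 * (1 + u) ^ 2 := by
    rw [← mul_pow]
    exact pow_le_pow_left₀ (by positivity) (by nlinarith) 2
  have e22 : ((2:ℝ) * 2 ^ n) ^ 2 = 4 * 4 ^ n := by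
    rw [mul_pow, ← pow_mul, mul_comm n 2, pow_mul]; norm_num
  calc _ ≤ ∑ k ∈ K, (2 * ‖Gosc u (fun x => c + rTP α F x) (rTP γ F) k -
          Gosc u (fun x => c + rTP α G x) (rTP γ G) k‖ ^ 2
          + 2 * ‖Gosc u (fun x => c + rTP α G x) (rTP γ G) k‖ ^ 2) := by
        refine Finset.sum_le_sum fun k _ => ?_
        set x := Gosc u (fun x => c + rTP α F x) (rTP γ F) k
        set y := Gosc u (fun x => c + rTP α G x) (rTP γ G) k
        have : ‖x‖ ≤ ‖x - y‖ + ‖y‖ := by simpa using norm_add_le (x - y) y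
        nlinarith [sq_nonneg (‖x - y‖ - ‖y‖), norm_nonneg x, norm_nonneg y, norm_nonneg (x - y)]
    _ = 2 * ∑ k ∈ K, ‖Gosc u (fun x => c + rTP α F x) (rTP γ F) k -
          Gosc u (fun x => c + rTP α G x) (rTP γ G) k‖ ^ 2
          + 2 * ∑ k ∈ K, ‖Gosc u (fun x => c + rTP α G x) (rTP γ G) k‖ ^ 2 := by
        rw [Finset.sum_add_distrib, Finset.mul_sum, Finset.mul_sum]
    _ ≤ 2 * (8 * π * Real.exp (-(u * c)) * ((1 + 2 * c * u) ^ 2 * (2 * π * X)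
          + 4 * c ^ 2 * (2 * 2 ^ n) ^ 2 * (2 * π * Y)))
        + 2 * (2 ^ n * (16 * π ^ 2 * c ^ 2 * Real.exp (-(u * c)) *
          (4 ^ ((m + 1) * m) / 4 ^ (n * m)))) := by
        gcongr
        · exact hdiff.trans (by gcongr)
        · refine (Finset.sum_le_card_nsmul _ _ _ hlow).trans ?_
          rw [nsmul_eq_mul]
          gcongr
          exact card_block hK
    _ = 32 * π ^ 2 * Real.exp (-(u * c)) * ((1 + 2 * c * u) ^ 2 * 1 * X + 16 * c ^ 2 * 4 ^ n * 1 * Y)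
        + 32 * π ^ 2 * c ^ 2 * 4 ^ ((m + 1) * m) * (2 ^ n / 4 ^ (n * m)) * (1 *
          Real.exp (-(u * c))) := by
        rw [e22]; ring
    _ ≤ 32 * π ^ 2 * Real.exp (-(u * c)) * (((1 + 2 * c) ^ 2 * (1 + u) ^ 2) * 4 ^ n * X
          + 16 * c ^ 2 * 4 ^ n * (1 + u) ^ 2 * Y)
        + 32 * π ^ 2 * c ^ 2 * 4 ^ ((m + 1) * m) * (2 ^ n / 4 ^ (n * m)) * ((1 + u) ^ 2 *
          Real.exp (-(u * c))) := by
        gcongr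
    _ ≤ _ := by
        rw [← sub_nonneg]
        have : 0 ≤ (32 * π ^ 2 * c ^ 2 * 4 ^ ((m + 1) * m) * (4 ^ n * (X + Y))
          + 32 * π ^ 2 * ((1 + 2 * c) ^ 2 + 16 * c ^ 2) * (2 ^ n / 4 ^ (n * m))
          + 32 * π ^ 2 * (1 + 2 * c) ^ 2 * 4 ^ n * Y + 32 * π ^ 2 * 16 * c ^ 2 * 4 ^ n * X)
          * ((1 + u) ^ 2 * Real.exp (-(u * c))) := by positivity
        refine this.trans (le_of_eq ?_)
        ring

/-! ### Integration against the square root weight -/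

lemma Gosc_continuous {A ψ : ℝ → ℝ} (hA : Continuous A) (hψ : Continuous ψ) (k : ℤ) :
    Continuous fun u => Gosc u A ψ k := by
  unfold Gosc
  apply intervalIntegral.continuous_parametric_intervalIntegral_of_continuous'
  fun_prop

lemma pow7_mul_exp_le {c u : ℝ} (hc : 0 < c) (hu : 0 ≤ u) :
    (1 + u) ^ 7 * Real.exp (-(u * c)) ≤ 5040 * Real.exp c / c ^ 7 := by
  have h := Real.pow_div_factorial_le_exp (c * (1 + u)) (by positivity) 7
  have h7 : ((Nat.factorial 7 : ℕ) : ℝ) = 5040 := by norm_num [Nat.factorial]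
  rw [h7, mul_pow, div_le_iff₀ (by norm_num)] at h
  rw [le_div_iff₀ (by positivity)]
  have e : Real.exp (c * (1 + u)) * Real.exp (-(u * c)) = Real.exp c := by
    rw [← Real.exp_add]; congr 1; ring
  rw [← e]
  nlinarith [Real.exp_pos (-(u * c))]

lemma integral_inv_sq_le {N : ℝ} (hN : 0 ≤ N) :
    ∫ u in (0:ℝ)..N, ((1 + |u|)⁻¹) ^ 2 ≤ 1 := by
  have e : ∫ u in (0:ℝ)..N, ((1 + |u|)⁻¹) ^ 2 = ∫ u in (0:ℝ)..N, ((1 + u) ^ 2)⁻¹ := by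
    refine intervalIntegral.integral_congr fun u hu => ?_
    rw [Set.uIcc_of_le hN] at hu
    rw [abs_of_nonneg hu.1, inv_pow]
  rw [e]
  have hpos : ∀ u ∈ Set.uIcc 0 N, (1 + u) ≠ 0 := fun u hu => by
    rw [Set.uIcc_of_le hN] at hu; linarith [hu.1]
  rw [intervalIntegral.integral_eq_sub_of_hasDerivAt (f := fun u => -(1 + u)⁻¹)]
  · have : 0 < (1 + N)⁻¹ := by positivity
    simp; linarith
  · intro u hu
    have := (((hasDerivAt_id u).const_add 1).inv (hpos u hu)).neg
    refine this.congr_deriv ?_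
    simp [neg_div]
  · apply ContinuousOn.intervalIntegrable
    apply ContinuousOn.inv₀ (by fun_prop)
    intro u hu; exact pow_ne_zero _ (hpos u hu)

/-- Integrating `g k (k t)` against the weight `2√t`, which comes from the square root singularity
of the Poisson integral, gains a factor `k ^ (-3/2)` on any exponentially decaying block bound. -/
lemma weighted_block {c D : ℝ} (hc : 0 < c) (hD : 0 ≤ D) (K : Finset ℤ) (hK : ∀ k ∈ K, 0 < k)
    (g : ℤ → ℝ → ℝ) (hg : ∀ k, Continuous (g k))
    (h : ∀ u, 0 ≤ u → ∑ k ∈ K, g k u ^ 2 ≤ D * ((1 + u) ^ 2 * Real.exp (-(u * c)))) :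
    ∑ k ∈ K, (k : ℝ) ^ 3 * (∫ t in (0:ℝ)..1, 2 * Real.sqrt t * g k (k * t)) ^ 2 ≤
      4 * D * (5040 * Real.exp c / c ^ 7) := by
  set N : ℝ := ∑ k ∈ K, (k : ℝ) with hNdef
  have hKp : ∀ k ∈ K, (0:ℝ) < k := fun k hk => by exact_mod_cast hK k hk
  have hN : 0 ≤ N := Finset.sum_nonneg fun k hk => (hKp k hk).le
  have hKN : ∀ k ∈ K, (k:ℝ) ≤ N := fun k hk =>
    Finset.single_le_sum (f := fun k : ℤ => (k:ℝ)) (fun j hj => (hKp j hj).le) hk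
  have key : ∀ k ∈ K, (k : ℝ) ^ 3 * (∫ t in (0:ℝ)..1, 2 * Real.sqrt t * g k (k * t)) ^ 2 ≤
      4 * ∫ u in (0:ℝ)..N, (Real.sqrt u * (1 + |u|) * g k u) ^ 2 := by
    intro k hk
    have hk0 := hKp k hk
    have e1 : ∫ t in (0:ℝ)..1, 2 * Real.sqrt t * g k (k * t) =
        2 * (Real.sqrt k)⁻¹ * ((k:ℝ)⁻¹ * ∫ u in (0:ℝ)..k, Real.sqrt u * g k u) := by
      have := intervalIntegral.integral_comp_mul_left (a := 0) (b := 1)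
        (fun u => Real.sqrt u * g k u) hk0.ne'
      simp only [mul_zero, mul_one, smul_eq_mul] at this
      rw [← this, ← intervalIntegral.integral_const_mul]
      refine intervalIntegral.integral_congr fun t ht => ?_
      rw [Real.sqrt_mul hk0.le]
      have := (Real.sqrt_pos.2 hk0).ne'
      field_simp
    have e2 : (k : ℝ) ^ 3 * (∫ t in (0:ℝ)..1, 2 * Real.sqrt t * g k (k * t)) ^ 2 =
        4 * (∫ u in (0:ℝ)..k, Real.sqrt u * g k u) ^ 2 := by
      rw [e1, mul_pow, mul_pow, mul_pow, inv_pow, Real.sq_sqrt hk0.le]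
      field_simp
      ring
    rw [e2]
    have e3 : ∫ u in (0:ℝ)..k, Real.sqrt u * g k u =
        ∫ u in (0:ℝ)..k, (1 + |u|)⁻¹ * (Real.sqrt u * (1 + |u|) * g k u) := by
      refine intervalIntegral.integral_congr fun u _ => ?_
      have : (1 + |u|) ≠ 0 := by positivity
      field_simp
    have hcont : Continuous fun u => Real.sqrt u * (1 + |u|) * g k u := by
      have := hg k; fun_prop
    have hinv : Continuous fun u : ℝ => (1 + |u|)⁻¹ :=
      Continuous.inv₀ (by fun_prop) fun u => by positivity
    have h1 := integral_cs hk0.le hinv hcont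
    rw [e3]
    gcongr
    refine h1.trans ?_
    have h0 : 0 ≤ ∫ u in (0:ℝ)..k, (Real.sqrt u * (1 + |u|) * g k u) ^ 2 :=
      intervalIntegral.integral_nonneg hk0.le fun u _ => sq_nonneg _
    have h2 : ∫ u in (0:ℝ)..k, (Real.sqrt u * (1 + |u|) * g k u) ^ 2 ≤
        ∫ u in (0:ℝ)..N, (Real.sqrt u * (1 + |u|) * g k u) ^ 2 :=
      intervalIntegral.integral_mono_interval le_rfl hk0.le (hKN k hk)
        (Filter.Eventually.of_forall fun u => sq_nonneg _)
        ((hcont.pow 2).intervalIntegrable _ _)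
    nlinarith [integral_inv_sq_le hk0.le]
  have hcont : ∀ k, Continuous fun u => (Real.sqrt u * (1 + |u|) * g k u) ^ 2 := fun k => by
    have := hg k; fun_prop
  have hinv : Continuous fun u : ℝ => (1 + |u|)⁻¹ :=
    Continuous.inv₀ (by fun_prop) fun u => by positivity
  refine (Finset.sum_le_sum key).trans ?_
  rw [← Finset.mul_sum, mul_assoc]
  gcongr
  rw [← intervalIntegral.integral_finsetSum fun k _ => (hcont k).intervalIntegrable _ _]
  have hE : 0 ≤ 5040 * Real.exp c / c ^ 7 := by positivity
  calc _ ≤ ∫ u in (0:ℝ)..N, D * (5040 * Real.exp c / c ^ 7) * ((1 + |u|)⁻¹) ^ 2 := by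
        apply intervalIntegral.integral_mono_on hN
        · exact (continuous_finsetSum _ fun k _ => hcont k).intervalIntegrable _ _
        · exact (by fun_prop : Continuous _).intervalIntegrable _ _
        · intro u hu
          have hu0 := hu.1
          rw [abs_of_nonneg hu0]
          calc ∑ k ∈ K, (Real.sqrt u * (1 + u) * g k u) ^ 2
              = u * (1 + u) ^ 2 * ∑ k ∈ K, g k u ^ 2 := by
                rw [Finset.mul_sum]
                refine Finset.sum_congr rfl fun k _ => ?_
                rw [mul_pow, mul_pow, Real.sq_sqrt hu0]
            _ ≤ (1 + u) * (1 + u) ^ 2 * (D * ((1 + u) ^ 2 * Real.exp (-(u * c)))) := by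
                gcongr
                · linarith
                · exact h u hu0
            _ = D * ((1 + u) ^ 7 * Real.exp (-(u * c))) * ((1 + u)⁻¹) ^ 2 := by
                field_simp
            _ ≤ _ := by
                gcongr
                exact pow7_mul_exp_le hc hu0
    _ = D * (5040 * Real.exp c / c ^ 7) * ∫ u in (0:ℝ)..N, ((1 + |u|)⁻¹) ^ 2 := by
        rw [intervalIntegral.integral_const_mul]
    _ ≤ D * (5040 * Real.exp c / c ^ 7) * 1 := by
        gcongr
        exact integral_inv_sq_le hN
    _ = _ := mul_one _

/-! ### From the Bessel function to the oscillatory integrals -/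

/-- The integral appearing in the `k`-th Fourier coefficient of `S(A - Astar, b)`. -/
def Mk (A b : ℝ → ℝ) (k : ℤ) : ℂ :=
  ∫ x in (0:ℝ)..(2 * π), ((J1 ((k : ℝ) * A x) : ℝ) : ℂ) *
    Complex.exp (-Complex.I * (k : ℂ) * ((x + b x : ℝ) : ℂ))

lemma csq_strip_continuous {σ : ℝ} (hσ : |σ| ≤ 1) :
    Continuous fun t : ℝ => csq ((σ : ℂ) + t * Complex.I) := by
  refine continuous_iff_continuousAt.2 fun t => ?_
  exact ContinuousAt.comp (f := fun t : ℝ => (σ : ℂ) + t * Complex.I) (csq_continuousAt hσ)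
    (by fun_prop)

/-- Fubini for the contribution of one vertical side of the shifted Poisson contour. -/
lemma side_swap {A b : ℝ → ℝ} (hA : Continuous A) (hb : Continuous b) (k : ℤ) {σ : ℝ}
    (hσ : |σ| ≤ 1) :
    ∫ x in (0:ℝ)..(2 * π), (A x : ℂ) * Complex.exp (-Complex.I * (k : ℂ) * ((x + b x : ℝ) : ℂ)) *
      (∫ t in (0:ℝ)..1, Complex.exp (Complex.I * ((k * A x : ℝ) : ℂ) * ((σ : ℂ) + t * Complex.I)) *
        csq ((σ : ℂ) + t * Complex.I)) =
    ∫ t in (0:ℝ)..1, csq ((σ : ℂ) + t * Complex.I) * Gosc (k * t) A (fun x => b x - σ * A x) k := by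
  have hcs := csq_strip_continuous hσ
  have hcs2 : Continuous fun p : ℝ × ℝ => csq ((σ : ℂ) + p.2 * Complex.I) :=
    hcs.comp continuous_snd
  simp only [← intervalIntegral.integral_const_mul]
  rw [intervalIntegral_intervalIntegral_swap]
  · refine intervalIntegral.integral_congr fun t _ => ?_
    simp only [Gosc, ← intervalIntegral.integral_const_mul]
    refine intervalIntegral.integral_congr fun x _ => ?_
    have e : Complex.exp (-Complex.I * (k : ℂ) * ((x + b x : ℝ) : ℂ)) *
        Complex.exp (Complex.I * ((k * A x : ℝ) : ℂ) * ((σ : ℂ) + t * Complex.I)) =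
        Complex.exp ((-(k * t * A x) : ℝ) : ℂ) *
          Complex.exp (-(Complex.I * k * ((x + (b x - σ * A x) : ℝ) : ℂ))) := by
      rw [← Complex.exp_add, ← Complex.exp_add]
      congr 1
      push_cast
      linear_combination (k:ℂ) * A x * t * Complex.I_sq
    rw [mul_assoc, ← mul_assoc (Complex.exp _) (Complex.exp _), e]
    push_cast
    ring
  · refine IntegrableOn.mono_set (t := Set.uIcc 0 (2 * π) ×ˢ Set.uIcc 0 1) ?_
      (Set.prod_mono Set.uIoc_subset_uIcc Set.uIoc_subset_uIcc)
    apply ContinuousOn.integrableOn_compact (isCompact_uIcc.prod isCompact_uIcc)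
    apply Continuous.continuousOn
    unfold Function.uncurry
    fun_prop

/-- On the vertical sides `σ = ±1` one has `1 - (σ + it)² = t² - 2iσt`. -/
lemma norm_csq_side {σ t : ℝ} (hσ : σ ^ 2 = 1) (ht : t ∈ Set.Icc (0:ℝ) 1) :
    ‖csq ((σ : ℂ) + t * Complex.I)‖ ≤ 2 * Real.sqrt t := by
  refine abs_le_of_sq_le_sq' ?_ (by positivity) |>.2
  rw [norm_csq_le, mul_pow, Real.sq_sqrt ht.1]
  have hσ' : (σ:ℂ) ^ 2 = 1 := by exact_mod_cast hσ
  have hab : |σ| = 1 := by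
    rw [← sq_abs] at hσ
    nlinarith [abs_nonneg σ]
  have e : 1 - ((σ : ℂ) + t * Complex.I) ^ 2 = ((t ^ 2 : ℝ) : ℂ) - ((2 * σ * t : ℝ) : ℂ) * Complex.I := by
    push_cast
    linear_combination -hσ' - (t:ℂ) ^ 2 * Complex.I_sq
  rw [e]
  refine (norm_sub_le _ _).trans ?_
  rw [norm_mul, Complex.norm_I, mul_one, Complex.norm_real, Complex.norm_real, Real.norm_eq_abs,
    Real.norm_eq_abs, abs_mul, abs_mul, hab, abs_of_nonneg ht.1, abs_of_nonneg (sq_nonneg t)]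
  norm_num
  nlinarith [ht.1, ht.2]

lemma norm_csq_top {τ : ℝ} (hτ : |τ| ≤ 1) : ‖csq ((τ : ℂ) + Complex.I)‖ ≤ 3 := by
  refine abs_le_of_sq_le_sq' ?_ (by positivity) |>.2
  have := norm_csq_le (a := τ) (b := 1)
  simp only [Complex.ofReal_one, one_mul] at this
  rw [this]
  refine (norm_sub_le _ _).trans ?_
  rw [norm_pow, norm_one]
  have : ‖(τ : ℂ) + Complex.I‖ ≤ 2 := by
    refine (norm_add_le _ _).trans ?_
    rw [Complex.norm_real, Complex.norm_I, Real.norm_eq_abs]; linarith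
  nlinarith [norm_nonneg ((τ : ℂ) + Complex.I)]

lemma norm_top_le (z : ℝ) :
    ‖∫ τ in (-1:ℝ)..1, Complex.exp (Complex.I * z * (τ + Complex.I)) * csq (τ + Complex.I)‖ ≤
      6 * Real.exp (-z) := by
  refine (intervalIntegral.norm_integral_le_of_norm_le_const (C := 3 * Real.exp (-z)) ?_).trans
    (le_of_eq ?_)
  · intro τ hτ
    rw [Set.uIoc_of_le (by norm_num)] at hτ
    rw [norm_mul, Complex.norm_exp, mul_comm]
    gcongr
    · exact norm_csq_top (abs_le.2 ⟨hτ.1.le, hτ.2⟩)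
    · simp
  · norm_num; ring

lemma Gosc_sub_const (u c : ℝ) (A ψ : ℝ → ℝ) (k : ℤ) :
    ‖Gosc u A (fun x => ψ x + c) k‖ = ‖Gosc u A ψ k‖ := by
  have e : Gosc u A (fun x => ψ x + c) k = Complex.exp (((-(k * c) : ℝ) : ℂ) * Complex.I) * Gosc u A ψ k := by
    unfold Gosc
    rw [← intervalIntegral.integral_const_mul]
    refine intervalIntegral.integral_congr fun x _ => ?_
    have e : Complex.exp (-(Complex.I * k * ((x + (ψ x + c) : ℝ) : ℂ))) =
        Complex.exp (((-(k * c) : ℝ) : ℂ) * Complex.I) *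
          Complex.exp (-(Complex.I * k * ((x + ψ x : ℝ) : ℂ))) := by
      rw [← Complex.exp_add]; congr 1; push_cast; ring
    simp only [e]
    ring
  rw [e, norm_mul, Complex.norm_exp_ofReal_mul_I, one_mul]

/-- Shifting the contour in Poisson's integral for `J₁` expresses the coefficient through the
amplitudes `Gosc (k t)`, up to an exponentially small remainder. -/
lemma norm_Mk_le {c : ℝ} {A b : ℝ → ℝ} (hA : Continuous A) (hb : Continuous b)
    (hc : 0 < c) (bA : ∀ x, |A x - c| ≤ c / 2) {k : ℤ} (hk : 0 < k) :
    ‖Mk A b k‖ ≤ (k / π) * (24 * π * c * Real.exp (-(k * c / 2))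
      + (∫ t in (0:ℝ)..1, 2 * Real.sqrt t * ‖Gosc (k * t) A (fun x => b x - A x) k‖)
      + ∫ t in (0:ℝ)..1, 2 * Real.sqrt t * ‖Gosc (k * t) A (fun x => b x + A x) k‖) := by
  have hπ := Real.pi_pos
  have hk0 : (0:ℝ) < k := by exact_mod_cast hk
  set P1 : ℝ → ℂ := fun x => ∫ τ in (-1:ℝ)..1,
    Complex.exp (Complex.I * ((k * A x : ℝ) : ℂ) * (τ + Complex.I)) * csq (τ + Complex.I) with hP1
  set P : ℝ → ℝ → ℂ := fun σ x => ∫ t in (0:ℝ)..1,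
    Complex.exp (Complex.I * ((k * A x : ℝ) : ℂ) * ((σ : ℂ) + t * Complex.I)) *
        csq ((σ : ℂ) + t * Complex.I) with hP
  set e : ℝ → ℂ := fun x => (A x : ℂ) * Complex.exp (-Complex.I * (k : ℂ) * ((x + b x : ℝ) : ℂ)) with he
  have cP1 : Continuous P1 := by
    have : ∀ x, P1 x = ∫ τ in (-1:ℝ)..1, Complex.exp (Complex.I * ((k * A x : ℝ) : ℂ) *
        (τ + Complex.I)) * csq ((max (-1) (min 1 τ) : ℝ) + Complex.I) := by
      intro x
      refine intervalIntegral.integral_congr fun τ hτ => ?_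
      rw [Set.uIcc_of_le (by norm_num)] at hτ
      rw [min_eq_right hτ.2, max_eq_right hτ.1]
    rw [funext this]
    apply intervalIntegral.continuous_parametric_intervalIntegral_of_continuous'
    have h1 : Continuous fun τ : ℝ => csq ((max (-1) (min 1 τ) : ℝ) + Complex.I) := by
      refine continuous_iff_continuousAt.2 fun τ => ?_
      have h2 : |max (-1) (min 1 τ)| ≤ 1 :=
        abs_le.2 ⟨le_max_left _ _, max_le (by norm_num) (min_le_left _ _)⟩
      have h3 := csq_continuousAt (b := 1) h2
      simp only [Complex.ofReal_one, one_mul] at h3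
      exact ContinuousAt.comp (f := fun τ : ℝ => ((max (-1) (min 1 τ) : ℝ) : ℂ) + Complex.I) h3
        (by fun_prop)
    have h2 : Continuous fun p : ℝ × ℝ => csq ((max (-1) (min 1 p.2) : ℝ) + Complex.I) :=
      h1.comp continuous_snd
    unfold Function.uncurry
    fun_prop
  have cP : ∀ σ : ℝ, |σ| ≤ 1 → Continuous (P σ) := by
    intro σ hσ
    apply intervalIntegral.continuous_parametric_intervalIntegral_of_continuous'
    have hcs2 : Continuous fun p : ℝ × ℝ => csq ((σ : ℂ) + p.2 * Complex.I) :=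
      (csq_strip_continuous hσ).comp continuous_snd
    unfold Function.uncurry
    fun_prop
  have ce : Continuous e := by fun_prop
  have c1 := cP 1 (by norm_num)
  have c2 := cP (-1) (by norm_num)
  have eM : Mk A b k = ((k / π : ℝ) : ℂ) * ((∫ x in (0:ℝ)..(2 * π), e x * P1 x)
      - Complex.I * (∫ x in (0:ℝ)..(2 * π), e x * P 1 x)
      + Complex.I * (∫ x in (0:ℝ)..(2 * π), e x * P (-1) x)) := by
    rw [← intervalIntegral.integral_const_mul, ← intervalIntegral.integral_const_mul,
      ← intervalIntegral.integral_sub (by exact (by fun_prop : Continuous _).intervalIntegrable _ _)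
        (by exact (by fun_prop : Continuous _).intervalIntegrable _ _),
      ← intervalIntegral.integral_add (by exact (by fun_prop : Continuous _).intervalIntegrable _ _)
        (by exact (by fun_prop : Continuous _).intervalIntegrable _ _),
      ← intervalIntegral.integral_const_mul]
    unfold Mk
    refine intervalIntegral.integral_congr fun x _ => ?_
    rw [J1_poisson_complex, poisson_shift]
    simp only [hP1, hP, he, Complex.ofReal_one, Complex.ofReal_neg]
    push_cast
    ring
  have side : ∀ σ : ℝ, σ ^ 2 = 1 → ‖∫ x in (0:ℝ)..(2 * π), e x * P σ x‖ ≤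
      ∫ t in (0:ℝ)..1, 2 * Real.sqrt t * ‖Gosc (k * t) A (fun x => b x - σ * A x) k‖ := by
    intro σ hσ
    have hσ1 : |σ| ≤ 1 := by
      rw [← sq_abs] at hσ
      nlinarith [abs_nonneg σ]
    rw [side_swap hA hb k hσ1]
    have hG : Continuous fun u => Gosc u A (fun x => b x - σ * A x) k :=
      Gosc_continuous hA (by fun_prop) k
    refine intervalIntegral.norm_integral_le_of_norm_le zero_le_one
      (Filter.Eventually.of_forall fun t ht => ?_) ?_
    · rw [norm_mul]
      gcongr
      exact norm_csq_side hσ ⟨ht.1.le, ht.2⟩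
    · have : Continuous fun t : ℝ => Gosc (k * t) A (fun x => b x - σ * A x) k :=
        hG.comp (by fun_prop : Continuous fun t : ℝ => (k:ℝ) * t)
      exact (by fun_prop : Continuous _).intervalIntegrable _ _
  have s1 := side 1 (by norm_num)
  have s2 := side (-1) (by norm_num)
  simp only [one_mul, neg_mul, sub_neg_eq_add] at s1 s2
  have s0 : ‖∫ x in (0:ℝ)..(2 * π), e x * P1 x‖ ≤ 24 * π * c * Real.exp (-(k * c / 2)) := by
    refine (intervalIntegral.norm_integral_le_of_norm_le_const
      (C := 2 * c * (6 * Real.exp (-(k * c / 2)))) ?_).trans (le_of_eq ?_)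
    · intro x _
      have hx := abs_le.1 (bA x)
      rw [norm_mul]
      gcongr
      · rw [he]
        simp only
        rw [norm_mul, Complex.norm_real, Complex.norm_exp, Real.norm_eq_abs,
          abs_of_pos (by linarith)]
        simp
        linarith
      · refine (norm_top_le _).trans ?_
        gcongr
        nlinarith
    · rw [sub_zero, abs_of_pos (by positivity)]; ring
  rw [eM, norm_mul, Complex.norm_real, Real.norm_eq_abs, abs_of_pos (by positivity)]
  gcongr
  refine (norm_add_le _ _).trans (add_le_add ((norm_sub_le _ _).trans (add_le_add s0 ?_)) ?_)
  · rw [norm_mul, Complex.norm_I, one_mul]; exact s1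
  · rw [norm_mul, Complex.norm_I, one_mul]; exact s2

/-! ### The dyadic block estimate for the Fourier coefficients -/

lemma Qb_mono {m n : ℕ} {w w' : ℤ → ℝ} {F : Finset ℤ} {r : ℝ} (hr : 1 ≤ r)
    (h : ∀ j, w' j ≤ r * w j) : Qb m n w' F ≤ r * Qb m n w F := by
  unfold Qb
  rw [mul_add]
  have h1 : (0:ℝ) ≤ 2 ^ n / 4 ^ (n * m) := by positivity
  refine add_le_add (by nlinarith) ?_
  rw [mul_left_comm]
  refine mul_le_mul_of_nonneg_left ?_ (by positivity)
  rw [Finset.mul_sum]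
  exact Finset.sum_le_sum fun j _ => h j

lemma rTP_add (α β : ℤ → ℂ) (F : Finset ℤ) (x : ℝ) :
    rTP (fun j => β j + α j) F x = rTP β F x + rTP α F x := by
  simp only [rTP, TP, add_mul, Finset.sum_add_distrib, Complex.add_re]

lemma rTP_sub (α β : ℤ → ℂ) (F : Finset ℤ) (x : ℝ) :
    rTP (fun j => β j - α j) F x = rTP β F x - rTP α F x := by
  simp only [rTP, TP, sub_mul, Finset.sum_sub_distrib, Complex.sub_re]

lemma wsum_add_le (α β : ℤ → ℂ) (F : Finset ℤ) :
    wsum (fun j => β j + α j) F ≤ wsum β F + wsum α F := by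
  unfold wsum
  rw [← Finset.sum_add_distrib]
  refine Finset.sum_le_sum fun j _ => ?_
  rw [← mul_add]
  have := one_le_jb j
  gcongr
  exact norm_add_le _ _

lemma wsum_sub_le (α β : ℤ → ℂ) (F : Finset ℤ) :
    wsum (fun j => β j - α j) F ≤ wsum β F + wsum α F := by
  unfold wsum
  rw [← Finset.sum_add_distrib]
  refine Finset.sum_le_sum fun j _ => ?_
  rw [← mul_add]
  have := one_le_jb j
  gcongr
  exact norm_sub_le _ _

lemma pow_mul_exp_le {c : ℝ} (hc : 0 < c) (m n : ℕ) {k : ℝ} (hk : 2 ^ n ≤ k) :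
    k ^ 3 * Real.exp (-(k * c)) ≤ ((2 * m + 3).factorial : ℝ) / c ^ (2 * m + 3) / 4 ^ (n * m) := by
  have hk0 : 0 < k := lt_of_lt_of_le (by positivity) hk
  have h := Real.pow_div_factorial_le_exp (k * c) (by positivity) (2 * m + 3)
  rw [div_le_iff₀ (by positivity)] at h
  rw [Real.exp_neg, ← div_eq_mul_inv, div_div, div_le_div_iff₀ (Real.exp_pos _) (by positivity)]
  have h4 : (4:ℝ) ^ (n * m) ≤ k ^ (2 * m) := by
    calc (4:ℝ) ^ (n * m) = (2 ^ n) ^ (2 * m) := by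
          rw [← pow_mul, show n * (2 * m) = 2 * (n * m) by ring, pow_mul 2 2]; norm_num
      _ ≤ _ := by gcongr
  calc k ^ 3 * (c ^ (2 * m + 3) * 4 ^ (n * m)) ≤ k ^ 3 * (c ^ (2 * m + 3) * k ^ (2 * m)) := by gcongr
    _ = (k * c) ^ (2 * m + 3) := by rw [mul_pow, pow_add k]; ring
    _ ≤ _ := by linarith

/-- The estimate of the Fourier coefficients on one dyadic block. -/
lemma Mk_block {c : ℝ} (hc : 0 < c) (m : ℕ) : ∃ C : ℝ, 0 < C ∧ ∀ (α β : ℤ → ℂ) (F : Finset ℤ),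
    (∀ j, (starRingEnd ℂ) (α j) = α (-j)) → (∀ j, (starRingEnd ℂ) (β j) = β (-j)) →
    (∀ j ∈ F, -j ∈ F) → wsum α F ≤ c / 2 → wsum α F ≤ 1 / 4 → wsum β F ≤ 1 / 4 →
    ∀ (n : ℕ) (K : Finset ℤ), (∀ k ∈ K, (2:ℤ) ^ n ≤ k ∧ k < 2 ^ (n + 1)) →
    ∑ k ∈ K, (k : ℝ) * ‖Mk (fun x => c + rTP α F x) (rTP β F) k‖ ^ 2 ≤
      C * Qb m n (fun j => ‖α j‖ ^ 2 + ‖β j‖ ^ 2) F := by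
  have hπ := Real.pi_pos
  obtain ⟨C₀, hC₀, hG⟩ := Gosc_block hc m
  set C₁ : ℝ := 24 * C₀ * (5040 * Real.exp c / c ^ 7) with hC₁
  set C₂ : ℝ := 576 * π ^ 2 * c ^ 2 * (((2 * m + 3).factorial : ℝ) / c ^ (2 * m + 3)) with hC₂
  have hC₁0 : 0 < C₁ := by positivity
  have hC₂0 : 0 < C₂ := by positivity
  refine ⟨3 / π ^ 2 * (C₂ + C₁), by positivity, ?_⟩
  intro α β F hα hβ hF s1 s2 s3 n K hK
  set w : ℤ → ℝ := fun j => ‖α j‖ ^ 2 + ‖β j‖ ^ 2 with hw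
  have hw0 : ∀ j, 0 ≤ w j := fun j => by positivity
  have hQ0 : 0 ≤ Qb m n w F := Qb_nonneg m n hw0 F
  set A : ℝ → ℝ := fun x => c + rTP α F x with hA
  have cα := rTP_continuous α F
  have cβ := rTP_continuous β F
  have cA : Continuous A := by fun_prop
  have bA : ∀ x, |A x - c| ≤ c / 2 := fun x => by
    simp only [hA, add_sub_cancel_left]
    exact (abs_rTP_le α F x).trans s1
  have hKpos : ∀ k ∈ K, 0 < k := fun k hk => lt_of_lt_of_le (by positivity) (hK k hk).1
  have main : ∀ γ : ℤ → ℂ, (∀ j, (starRingEnd ℂ) (γ j) = γ (-j)) → wsum γ F ≤ 1 / 2 →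
      (∀ j, ‖γ j‖ ^ 2 ≤ 2 * (‖α j‖ ^ 2 + ‖β j‖ ^ 2)) →
      ∑ k ∈ K, (k : ℝ) ^ 3 * (∫ t in (0:ℝ)..1, 2 * Real.sqrt t * ‖Gosc (k * t) A (rTP γ F) k‖) ^ 2 ≤
        C₁ / 2 * Qb m n w F := by
    intro γ hγ sγ hn
    have h1 := hG α γ F hα hγ hF s1 sγ n K hK
    have hq : Qb m n (fun j => ‖α j‖ ^ 2 + ‖γ j‖ ^ 2) F ≤ 3 * Qb m n w F :=
      Qb_mono (by norm_num) fun j => by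
        have := hn j
        simp only [hw]
        nlinarith [sq_nonneg ‖β j‖]
    have cγ := rTP_continuous γ F
    have hq0 : 0 ≤ Qb m n (fun j => ‖α j‖ ^ 2 + ‖γ j‖ ^ 2) F :=
      Qb_nonneg m n (fun j => by positivity) F
    have h2 := weighted_block hc (D := C₀ * Qb m n (fun j => ‖α j‖ ^ 2 + ‖γ j‖ ^ 2) F)
      (by positivity) K hKpos (fun k u => ‖Gosc u A (rTP γ F) k‖)
      (fun k => (Gosc_continuous cA cγ k).norm) h1
    refine h2.trans ?_
    calc _ ≤ 4 * (C₀ * (3 * Qb m n w F)) * (5040 * Real.exp c / c ^ 7) := by gcongr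
      _ = _ := by rw [hC₁]; ring
  have hdiff := main (fun j => β j - α j) (fun j => by rw [map_sub, hα, hβ])
    ((wsum_sub_le α β F).trans (by linarith)) (fun j => by
      have := norm_sub_le (β j) (α j)
      nlinarith [norm_nonneg (β j - α j), norm_nonneg (α j), norm_nonneg (β j),
        sq_nonneg (‖α j‖ - ‖β j‖)])
  have hsum := main (fun j => β j + α j) (fun j => by rw [map_add, hα, hβ])
    ((wsum_add_le α β F).trans (by linarith)) (fun j => by
      have := norm_add_le (β j) (α j)
      nlinarith [norm_nonneg (β j + α j), norm_nonneg (α j), norm_nonneg (β j),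
        sq_nonneg (‖α j‖ - ‖β j‖)])
  have e1 : ∀ u k, ‖Gosc u A (fun x => rTP β F x - A x) k‖ =
      ‖Gosc u A (rTP (fun j => β j - α j) F) k‖ := fun u k => by
    rw [← Gosc_sub_const u (-c) A (rTP (fun j => β j - α j) F)]
    congr 2; funext x; rw [rTP_sub]; simp only [hA]; ring
  have e2 : ∀ u k, ‖Gosc u A (fun x => rTP β F x + A x) k‖ =
      ‖Gosc u A (rTP (fun j => β j + α j) F) k‖ := fun u k => by
    rw [← Gosc_sub_const u c A (rTP (fun j => β j + α j) F)]
    congr 2; funext x; rw [rTP_add]; simp only [hA]; ring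
  have hE : ∑ k ∈ K, (k:ℝ) ^ 3 * (24 * π * c * Real.exp (-(k * c / 2))) ^ 2 ≤ C₂ * Qb m n w F := by
    have h1 : ∀ k ∈ K, (k:ℝ) ^ 3 * (24 * π * c * Real.exp (-(k * c / 2))) ^ 2 ≤
        C₂ / 4 ^ (n * m) := fun k hk => by
      have hk' : (2:ℝ) ^ n ≤ k := by exact_mod_cast (hK k hk).1
      have e : Real.exp (-(k * c)) = Real.exp (-(k * c / 2)) ^ 2 := by
        rw [← Real.exp_nat_mul]; congr 1; push_cast; ring
      calc _ = 576 * π ^ 2 * c ^ 2 * ((k:ℝ) ^ 3 * Real.exp (-(k * c))) := by rw [e]; ring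
        _ ≤ 576 * π ^ 2 * c ^ 2 * (((2 * m + 3).factorial : ℝ) / c ^ (2 * m + 3) / 4 ^ (n * m)) := by
            gcongr; exact pow_mul_exp_le hc m n hk'
        _ = _ := by rw [hC₂]; ring
    refine (Finset.sum_le_card_nsmul _ _ _ h1).trans ?_
    rw [nsmul_eq_mul]
    have h3 : (0:ℝ) ≤ 4 ^ n * ∑ j ∈ F.filter (fun j:ℤ => ¬ |(j:ℝ)| ≤ ((2^(n-(m+1)):ℕ):ℝ)), w j :=
      mul_nonneg (by positivity) (Finset.sum_nonneg fun j _ => hw0 j)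
    calc (K.card : ℝ) * (C₂ / 4 ^ (n * m)) ≤ 2 ^ n * (C₂ / 4 ^ (n * m)) := by
          gcongr; exact card_block hK
      _ = C₂ * (2 ^ n / 4 ^ (n * m)) := by ring
      _ ≤ _ := by
          gcongr
          unfold Qb
          linarith
  calc _ ≤ ∑ k ∈ K, (3 / π ^ 2) * ((k:ℝ) ^ 3 * (24 * π * c * Real.exp (-(k * c / 2))) ^ 2
        + (k : ℝ) ^ 3 * (∫ t in (0:ℝ)..1, 2 * Real.sqrt t * ‖Gosc (k * t) A (rTP (fun j => β j - α j) F) k‖) ^ 2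
        + (k : ℝ) ^ 3 * (∫ t in (0:ℝ)..1, 2 * Real.sqrt t * ‖Gosc (k * t) A (rTP (fun j => β j + α j) F) k‖) ^ 2) := by
        refine Finset.sum_le_sum fun k hk => ?_
        have hk0 : (0:ℝ) < k := by exact_mod_cast hKpos k hk
        have h := norm_Mk_le cA cβ hc bA (hKpos k hk)
        simp only [e1, e2] at h
        set X := 24 * π * c * Real.exp (-(k * c / 2))
        set Y := ∫ t in (0:ℝ)..1, 2 * Real.sqrt t * ‖Gosc (k * t) A (rTP (fun j => β j - α j) F) k‖
        set Z := ∫ t in (0:ℝ)..1, 2 * Real.sqrt t * ‖Gosc (k * t) A (rTP (fun j => β j + α j) F) k‖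
        calc (k:ℝ) * ‖Mk A (rTP β F) k‖ ^ 2 ≤ k * ((k / π) * (X + Y + Z)) ^ 2 := by gcongr
          _ = (1 / π ^ 2) * (k:ℝ) ^ 3 * (X + Y + Z) ^ 2 := by field_simp
          _ ≤ (1 / π ^ 2) * (k:ℝ) ^ 3 * (3 * (X ^ 2 + Y ^ 2 + Z ^ 2)) := by
              gcongr
              nlinarith [sq_nonneg (X - Y), sq_nonneg (X - Z), sq_nonneg (Y - Z)]
          _ = _ := by ring
    _ ≤ (3 / π ^ 2) * (C₂ * Qb m n w F + C₁ / 2 * Qb m n w F + C₁ / 2 * Qb m n w F) := by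
        rw [← Finset.mul_sum, Finset.sum_add_distrib, Finset.sum_add_distrib]
        gcongr
    _ = _ := by ring

/-! ### Summation over the dyadic blocks -/

lemma geom_full {q : ℝ} (hq : 1 ≤ q) (N : ℕ) :
    ∑ n ∈ Finset.range (N + 1), ((2:ℝ) ^ n) ^ q ≤ 2 * ((2:ℝ) ^ N) ^ q := by
  induction N with
  | zero => simp
  | succ N ih =>
    rw [Finset.sum_range_succ]
    have h2 : (2:ℝ) ≤ 2 ^ q := by
      simpa using Real.rpow_le_rpow_of_exponent_le (by norm_num : (1:ℝ) ≤ 2) hq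
    have e : ((2:ℝ) ^ (N + 1)) ^ q = ((2:ℝ) ^ N) ^ q * 2 ^ q := by
      rw [pow_succ, Real.mul_rpow (by positivity) (by positivity)]
    have h0 : 0 < ((2:ℝ) ^ N) ^ q := by positivity
    rw [e] at *
    nlinarith

/-- A geometric sum is dominated by its last term; here the last `2^n` below a threshold `Y`. -/
lemma geom_cut {q : ℝ} (hq : 1 ≤ q) {Y : ℝ} (hY : 0 ≤ Y) (N : ℕ) :
    ∑ n ∈ Finset.range N, (if (2:ℝ) ^ n ≤ Y then ((2:ℝ) ^ n) ^ q else 0) ≤ 2 * Y ^ q := by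
  induction N with
  | zero => simp; positivity
  | succ N ih =>
    by_cases h : (2:ℝ) ^ N ≤ Y
    · calc _ ≤ ∑ n ∈ Finset.range (N + 1), ((2:ℝ) ^ n) ^ q := by
            refine Finset.sum_le_sum fun n _ => ?_
            split_ifs
            · exact le_rfl
            · positivity
        _ ≤ 2 * ((2:ℝ) ^ N) ^ q := geom_full hq N
        _ ≤ _ := by gcongr
    · rw [Finset.sum_range_succ, if_neg h, add_zero]
      exact ih

lemma sum_blocks (f : ℤ → ℝ) (N : ℕ) :
    ∑ k ∈ Finset.Ico (1:ℤ) (2 ^ N), f k =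
      ∑ n ∈ Finset.range N, ∑ k ∈ Finset.Ico ((2:ℤ) ^ n) (2 ^ (n + 1)), f k := by
  induction N with
  | zero => simp
  | succ N ih =>
    rw [Finset.sum_range_succ, ← ih, ← Finset.sum_union (Finset.Ico_disjoint_Ico_consecutive _ _ _),
      Finset.Ico_union_Ico_eq_Ico]
    · exact one_le_pow₀ (by norm_num)
    · exact pow_le_pow_right₀ (by norm_num) (Nat.le_succ N)

/-- Summation of the block estimates: the weight `k^{2s-3}` is absorbed by the Fourier modes of
`(a, b)` of index at least comparable to `k`. -/
lemma Qb_sum {s : ℝ} (hs : 7 / 2 ≤ s) {m : ℕ} (hm : s ≤ m) {w : ℤ → ℝ} (hw : ∀ j, 0 ≤ w j)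
    (F : Finset ℤ) (N : ℕ) :
    ∑ n ∈ Finset.range N, ((2:ℝ) ^ (n + 1)) ^ (2 * s - 3) * Qb m n w F ≤
      (2 * 2 ^ (2 * s - 3) + 2 ^ (2 * s - 3) * (2 * ((2:ℝ) ^ (m + 1)) ^ (2 * s - 1))) *
        (1 + ∑ j ∈ F, jb j ^ (2 * s - 1) * w j) := by
  set p := 2 * s - 3 with hp
  set q := 2 * s - 1 with hq
  have hq1 : 1 ≤ q := by linarith
  have hX : ∀ n : ℕ, ((2:ℝ) ^ (n + 1)) ^ p = 2 ^ p * ((2:ℝ) ^ n) ^ p := fun n => by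
    rw [pow_succ, Real.mul_rpow (by positivity) (by positivity), mul_comm]
  have h1 : ∀ n : ℕ, ((2:ℝ) ^ (n + 1)) ^ p * (2 ^ n / 4 ^ (n * m)) ≤ 2 ^ p * (1 / 4) ^ n := by
    intro n
    rw [hX, mul_assoc]
    gcongr
    set X : ℝ := (2:ℝ) ^ n with hXd
    have hX1 : 1 ≤ X := one_le_pow₀ (by norm_num)
    have hX0 : 0 < X := by positivity
    have e4 : (4:ℝ) ^ (n * m) = X ^ (2 * (m:ℝ)) := by
      rw [show (2 * (m:ℝ)) = ((2 * m : ℕ) : ℝ) by push_cast; ring, Real.rpow_natCast, hXd, ← pow_mul,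
        show n * (2 * m) = 2 * (n * m) by ring, pow_mul 2 2]; norm_num
    have e5 : (1 / 4 : ℝ) ^ n = X ^ (-2 : ℝ) := by
      rw [Real.rpow_neg hX0.le, show (2:ℝ) = ((2:ℕ):ℝ) by norm_num, Real.rpow_natCast, hXd,
        ← pow_mul, mul_comm n 2, pow_mul 2 2, one_div, inv_pow]
      norm_num
    have e6 : X ^ p * (X / X ^ (2 * (m:ℝ))) = X ^ (p + (1 - 2 * m)) := by
      rw [Real.rpow_add hX0 p, Real.rpow_sub hX0 1, Real.rpow_one]
    rw [e4, e5, e6]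
    exact Real.rpow_le_rpow_of_exponent_le hX1 (by linarith)
  have h1s : ∑ n ∈ Finset.range N, ((2:ℝ) ^ (n + 1)) ^ p * (2 ^ n / 4 ^ (n * m)) ≤ 2 * 2 ^ p := by
    refine (Finset.sum_le_sum fun n _ => h1 n).trans ?_
    rw [← Finset.mul_sum, mul_comm]
    gcongr
    have := geom_sum_eq (by norm_num : (1 / 4 : ℝ) ≠ 1) N
    rw [this]
    have : (0:ℝ) < (1 / 4) ^ N := by positivity
    rw [div_le_iff_of_neg (by norm_num)]
    linarith
  have h2s : ∑ n ∈ Finset.range N, ((2:ℝ) ^ (n + 1)) ^ p *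
      (4 ^ n * ∑ j ∈ F.filter (fun j:ℤ => ¬ |(j:ℝ)| ≤ ((2^(n-(m+1)):ℕ):ℝ)), w j) ≤
      2 ^ p * (2 * ((2:ℝ) ^ (m + 1)) ^ q) * ∑ j ∈ F, jb j ^ q * w j := by
    have e : ∀ n : ℕ, ((2:ℝ) ^ (n + 1)) ^ p *
      (4 ^ n * ∑ j ∈ F.filter (fun j:ℤ => ¬ |(j:ℝ)| ≤ ((2^(n-(m+1)):ℕ):ℝ)), w j) ≤
        ∑ j ∈ F, 2 ^ p * w j * (if (2:ℝ) ^ n ≤ 2 ^ (m + 1) * jb j then ((2:ℝ) ^ n) ^ q else 0) := by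
      intro n
      have e4 : (4:ℝ) ^ n = ((2:ℝ) ^ n) ^ (2:ℝ) := by
        rw [show (2:ℝ) = ((2:ℕ):ℝ) by norm_num, Real.rpow_natCast, ← pow_mul, mul_comm n 2, pow_mul]
        norm_num
      have e5 : ((2:ℝ) ^ n) ^ q = ((2:ℝ) ^ n) ^ p * 4 ^ n := by
        rw [e4, ← Real.rpow_add (by positivity)]; congr 1; rw [hp, hq]; ring
      rw [hX, Finset.sum_filter, Finset.mul_sum, Finset.mul_sum]
      refine Finset.sum_le_sum fun j _ => ?_
      by_cases hj : ¬ |(j:ℝ)| ≤ ((2^(n-(m+1)):ℕ):ℝ)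
      · have hj' : (2:ℝ) ^ n ≤ 2 ^ (m + 1) * jb j := by
          have h3 : ((2^(n-(m+1)):ℕ):ℝ) ≤ jb j := (not_le.1 hj).le.trans (abs_le_jb j)
          calc (2:ℝ) ^ n ≤ 2 ^ ((m + 1) + (n - (m + 1))) :=
                pow_le_pow_right₀ (by norm_num) (by omega)
            _ = 2 ^ (m + 1) * ((2^(n-(m+1)):ℕ):ℝ) := by rw [pow_add]; push_cast; rfl
            _ ≤ _ := by gcongr
        rw [if_pos hj, if_pos hj', e5]
        exact le_of_eq (by ring)
      · rw [if_neg hj, mul_zero, mul_zero]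
        have := hw j
        split_ifs <;> positivity
    refine (Finset.sum_le_sum fun n _ => e n).trans ?_
    rw [Finset.sum_comm, Finset.mul_sum]
    refine Finset.sum_le_sum fun j _ => ?_
    rw [← Finset.mul_sum]
    have hj0 := jb_pos j
    have := geom_cut hq1 (Y := 2 ^ (m + 1) * jb j) (by positivity) N
    rw [Real.mul_rpow (by positivity) hj0.le] at this
    have hwj := hw j
    calc _ ≤ 2 ^ p * w j * (2 * (((2:ℝ) ^ (m + 1)) ^ q * jb j ^ q)) := by gcongr
      _ = _ := by ring
  have h3 : 0 ≤ ∑ j ∈ F, jb j ^ q * w j :=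
    Finset.sum_nonneg fun j _ => mul_nonneg (Real.rpow_nonneg (jb_pos j).le _) (hw j)
  simp only [Qb, mul_add, Finset.sum_add_distrib] at *
  have h4 : (0:ℝ) < 2 ^ p := by positivity
  have h5 : (0:ℝ) < 2 ^ p * (2 * ((2:ℝ) ^ (m + 1)) ^ q) := by positivity
  have h6 := mul_nonneg h4.le h3
  nlinarith

/-- The tame estimate for trigonometric polynomials. -/
lemma Mk_sum {c : ℝ} (hc : 0 < c) {s : ℝ} (hs : 7 / 2 ≤ s) : ∃ C : ℝ, 0 < C ∧
    ∀ (α β : ℤ → ℂ) (F : Finset ℤ),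
    (∀ j, (starRingEnd ℂ) (α j) = α (-j)) → (∀ j, (starRingEnd ℂ) (β j) = β (-j)) →
    (∀ j ∈ F, -j ∈ F) → wsum α F ≤ c / 2 → wsum α F ≤ 1 / 4 → wsum β F ≤ 1 / 4 → ∀ N : ℕ,
    ∑ k ∈ Finset.Ico (1:ℤ) (2 ^ N),
        (k : ℝ) ^ (2 * s - 2) * ‖Mk (fun x => c + rTP α F x) (rTP β F) k‖ ^ 2 ≤
      C * (1 + ∑ j ∈ F, jb j ^ (2 * s - 1) * (‖α j‖ ^ 2 + ‖β j‖ ^ 2)) := by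
  obtain ⟨m, hm⟩ := exists_nat_ge s
  obtain ⟨C, hC, h⟩ := Mk_block hc m
  refine ⟨C * (2 * 2 ^ (2 * s - 3) + 2 ^ (2 * s - 3) * (2 * ((2:ℝ) ^ (m + 1)) ^ (2 * s - 1))),
    by positivity, ?_⟩
  intro α β F hα hβ hF s1 s2 s3 N
  rw [sum_blocks]
  have hb : ∀ n, ∑ k ∈ Finset.Ico ((2:ℤ) ^ n) (2 ^ (n + 1)),
      (k : ℝ) ^ (2 * s - 2) * ‖Mk (fun x => c + rTP α F x) (rTP β F) k‖ ^ 2 ≤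
      C * (((2:ℝ) ^ (n + 1)) ^ (2 * s - 3) * Qb m n (fun j => ‖α j‖ ^ 2 + ‖β j‖ ^ 2) F) := by
    intro n
    have h1 := h α β F hα hβ hF s1 s2 s3 n (Finset.Ico ((2:ℤ) ^ n) (2 ^ (n + 1)))
      (fun k hk => Finset.mem_Ico.1 hk)
    calc _ ≤ ∑ k ∈ Finset.Ico ((2:ℤ) ^ n) (2 ^ (n + 1)), ((2:ℝ) ^ (n + 1)) ^ (2 * s - 3) *
          ((k : ℝ) * ‖Mk (fun x => c + rTP α F x) (rTP β F) k‖ ^ 2) := by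
          refine Finset.sum_le_sum fun k hk => ?_
          obtain ⟨hk1, hk2⟩ := Finset.mem_Ico.1 hk
          have hk0 : (0:ℝ) < k := by
            have : (0:ℤ) < k := lt_of_lt_of_le (by positivity) hk1
            exact_mod_cast this
          have hk3 : (k:ℝ) ≤ 2 ^ (n + 1) := by exact_mod_cast hk2.le
          rw [show 2 * s - 2 = (2 * s - 3) + 1 by ring, Real.rpow_add hk0, Real.rpow_one, mul_assoc]
          gcongr
          linarith
      _ ≤ ((2:ℝ) ^ (n + 1)) ^ (2 * s - 3) * (C * Qb m n (fun j => ‖α j‖ ^ 2 + ‖β j‖ ^ 2) F) := by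
          rw [← Finset.mul_sum]
          gcongr
      _ = _ := by ring
  refine (Finset.sum_le_sum fun n _ => hb n).trans ?_
  rw [← Finset.mul_sum, mul_assoc]
  gcongr
  exact Qb_sum hs hm (fun j => by positivity) F N

/-! ### Fourier coefficients of smooth periodic functions -/

lemma fcR_conj (a : ℝ → ℝ) (j : ℤ) : (starRingEnd ℂ) (fcR a j) = fcR a (-j) := by
  unfold fcR fc
  rw [map_mul, ← intervalIntegral.intervalIntegral_conj]
  congr 1
  · simpa using map_ofNat (starRingEnd ℂ) 2
  · refine intervalIntegral.integral_congr fun x _ => ?_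
    rw [map_mul, Complex.conj_ofReal, ← Complex.exp_conj]
    congr 2
    simp

lemma smoothPer_deriv {a : ℝ → ℝ} (ha : smoothPer a) : smoothPer (deriv a) := by
  refine ⟨?_, fun x => ?_⟩
  · exact (contDiff_infty_iff_deriv.1 ha.1).2
  · have h : (fun x => a (x + 2 * π)) = a := funext ha.2
    have := deriv_comp_add_const (f := a) (2 * π) x
    rw [h] at this
    exact this.symm

lemma fcR_deriv {a : ℝ → ℝ} (ha : smoothPer a) (j : ℤ) :
    fcR (deriv a) j = Complex.I * j * fcR a j := by
  have hd : ∀ x, HasDerivAt a (deriv a x) x := fun x =>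
    ((contDiff_infty_iff_deriv.1 ha.1).1 x).hasDerivAt
  have hc := (smoothPer_deriv ha).1.continuous
  have hca := ha.1.continuous
  have h1 : ∀ x ∈ Set.uIcc 0 (2 * π), HasDerivAt (fun x : ℝ => (a x : ℂ)) ((deriv a x : ℝ) : ℂ) x :=
    fun x _ => (hd x).ofReal_comp
  have h2 : ∀ x ∈ Set.uIcc 0 (2 * π), HasDerivAt
      (fun x : ℝ => Complex.exp (-Complex.I * (j : ℂ) * (x : ℂ)))
      (Complex.exp (-Complex.I * (j : ℂ) * (x : ℂ)) * (-Complex.I * (j : ℂ))) x := fun x _ => by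
    have h := ((hasDerivAt_id x).ofReal_comp.const_mul (-Complex.I * (j : ℂ))).cexp
    simpa using h
  have h := intervalIntegral.integral_mul_deriv_eq_deriv_mul h1 h2
    (by exact (by fun_prop : Continuous _).intervalIntegrable _ _)
    (by exact (by fun_prop : Continuous _).intervalIntegrable _ _)
  have e1 : Complex.exp (-Complex.I * (j : ℂ) * ((2 * π : ℝ) : ℂ)) = 1 := by
    rw [Complex.exp_eq_one_iff]
    exact ⟨-j, by push_cast; ring⟩
  have e2 : a (2 * π) = a 0 := by simpa using ha.2 0
  rw [e1, e2] at h
  simp only [Complex.ofReal_zero, mul_zero, Complex.exp_zero, sub_self, zero_sub] at h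
  have e3 : ∫ x in (0:ℝ)..(2 * π), (a x : ℂ) *
      (Complex.exp (-Complex.I * (j : ℂ) * (x : ℂ)) * (-Complex.I * (j : ℂ))) =
      (-Complex.I * (j : ℂ)) * ∫ x in (0:ℝ)..(2 * π), (a x : ℂ) *
        Complex.exp (-Complex.I * (j : ℂ) * (x : ℂ)) := by
    rw [← intervalIntegral.integral_const_mul]
    exact intervalIntegral.integral_congr fun x _ => by ring
  rw [e3] at h
  unfold fcR fc
  linear_combination (1 / (2 * (π : ℂ))) * h

lemma fcR_bound {a : ℝ → ℝ} (ha : smoothPer a) : ∃ C : ℝ, 0 ≤ C ∧ ∀ j, ‖fcR a j‖ ≤ C := by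
  have hπ := Real.pi_pos
  have hca := ha.1.continuous
  refine ⟨‖(1 / (2 * (π : ℂ)))‖ * ∫ x in (0:ℝ)..(2 * π), |a x|, ?_, fun j => ?_⟩
  · exact mul_nonneg (norm_nonneg _) (intervalIntegral.integral_nonneg (by positivity) fun x _ => abs_nonneg _)
  · unfold fcR fc
    rw [norm_mul]
    gcongr
    refine intervalIntegral.norm_integral_le_of_norm_le (by positivity)
      (Filter.Eventually.of_forall fun x _ => ?_) (by exact (by fun_prop : Continuous _).intervalIntegrable _ _)
    rw [norm_mul, Complex.norm_exp, Complex.norm_real]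
    simp

lemma fcR_pow_bound (n : ℕ) : ∀ {a : ℝ → ℝ}, smoothPer a →
    ∃ C : ℝ, 0 ≤ C ∧ ∀ j : ℤ, |(j:ℝ)| ^ n * ‖fcR a j‖ ≤ C := by
  induction n with
  | zero => intro a ha; simpa using fcR_bound ha
  | succ n ih =>
    intro a ha
    obtain ⟨C, h0, h⟩ := ih (smoothPer_deriv ha)
    refine ⟨C, h0, fun j => ?_⟩
    have := h j
    rw [fcR_deriv ha, norm_mul, norm_mul, Complex.norm_I, one_mul, Complex.norm_intCast] at this
    rw [pow_succ, mul_assoc]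
    exact this

lemma jb_pow_bound (n : ℕ) {a : ℝ → ℝ} (ha : smoothPer a) :
    ∃ C : ℝ, 0 ≤ C ∧ ∀ j : ℤ, jb j ^ n * ‖fcR a j‖ ≤ C := by
  obtain ⟨C, h0, h⟩ := fcR_pow_bound n ha
  obtain ⟨C', h0', h'⟩ := fcR_bound ha
  refine ⟨C + C', by positivity, fun j => ?_⟩
  rcases max_choice 1 |(j:ℝ)| with e | e
  · rw [jb, e, one_pow, one_mul]; linarith [h' j]
  · rw [jb, e]; linarith [h j]

lemma summable_jb : Summable fun j : ℤ => (jb j ^ 2)⁻¹ := by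
  have h1 : Summable fun j : ℤ => 1 / (j:ℝ) ^ 2 := Real.summable_one_div_int_pow.2 (by norm_num)
  have h2 : Summable fun j : ℤ => if j = 0 then (1:ℝ) else 0 :=
    (hasSum_ite_eq 0 1).summable
  refine (h1.add h2).congr fun j => ?_
  rcases eq_or_ne j 0 with rfl | hj
  · simp [jb]
  · have : (1:ℝ) ≤ |(j:ℝ)| := by
      have := Int.one_le_abs hj
      exact_mod_cast this
    rw [if_neg hj, jb, max_eq_right this, sq_abs]
    simp

lemma summable_weight (s : ℝ) {a : ℝ → ℝ} (ha : smoothPer a) :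
    Summable fun j : ℤ => jb j ^ (2 * s) * ‖fcR a j‖ ^ 2 := by
  obtain ⟨n, hn⟩ := exists_nat_ge (s + 1)
  obtain ⟨C, h0, h⟩ := jb_pow_bound n ha
  refine Summable.of_nonneg_of_le (fun j => ?_) (fun j => ?_) (summable_jb.mul_left (C ^ 2))
  · have := jb_pos j; positivity
  · have hj := jb_pos j
    rw [← div_eq_mul_inv, le_div_iff₀ (by positivity)]
    calc jb j ^ (2 * s) * ‖fcR a j‖ ^ 2 * jb j ^ 2 = jb j ^ (2 * s + 2) * ‖fcR a j‖ ^ 2 := by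
          rw [Real.rpow_add hj, Real.rpow_two]; ring
      _ ≤ jb j ^ (2 * (n:ℝ)) * ‖fcR a j‖ ^ 2 := by
          gcongr
          · exact one_le_jb j
          · linarith
      _ = (jb j ^ n * ‖fcR a j‖) ^ 2 := by
          rw [mul_pow, ← pow_mul, show (2 * (n:ℝ)) = ((n * 2 : ℕ):ℝ) by push_cast; ring,
            Real.rpow_natCast]
      _ ≤ C ^ 2 := pow_le_pow_left₀ (by positivity) (h j) 2

lemma summable_fcR {a : ℝ → ℝ} (ha : smoothPer a) : Summable (fcR a) := by
  obtain ⟨C, h0, h⟩ := jb_pow_bound 2 ha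
  refine Summable.of_norm_bounded (summable_jb.mul_left C) fun j => ?_
  have hj := jb_pos j
  rw [← div_eq_mul_inv, le_div_iff₀ (by positivity), mul_comm]
  exact h j

/-- Pointwise Fourier inversion for smooth periodic functions, along symmetric partial sums. -/
lemma tendsto_rTP {a : ℝ → ℝ} (ha : smoothPer a) (x : ℝ) :
    Filter.Tendsto (fun M : ℕ => rTP (fcR a) (Finset.Icc (-(M:ℤ)) M) x) Filter.atTop (nhds (a x)) := by
  have : Fact (0 < 2 * π) := ⟨by positivity⟩
  have hper : Function.Periodic (fun x => (a x : ℂ)) (2 * π) := fun x => by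
    simp only; rw [ha.2 x]
  let f : C(AddCircle (2 * π), ℂ) := ⟨hper.lift, by
    refine continuous_coinduced_dom.2 ?_
    exact Complex.continuous_ofReal.comp ha.1.continuous⟩
  have hf : ∀ x : ℝ, f (x : AddCircle (2 * π)) = (a x : ℂ) := fun x => rfl
  have e : fourierCoeff f = fcR a := by
    funext j
    rw [fourierCoeff_eq_intervalIntegral _ j 0, zero_add, fcR, fc, Complex.real_smul]
    congr 1
    · push_cast; ring
    · refine intervalIntegral.integral_congr fun x _ => ?_
      rw [hf, fourier_coe_apply, smul_eq_mul, mul_comm]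
      congr 2
      have : (π : ℂ) ≠ 0 := by exact_mod_cast Real.pi_ne_zero
      push_cast
      field_simp
  have hs := has_pointwise_sum_fourier_series_of_summable (f := f) (by rw [e]; exact summable_fcR ha)
    (x : AddCircle (2 * π))
  rw [e, hf, HasSum, SummationFilter.unconditional_filter] at hs
  have h1 := hs.comp (Finset.tendsto_Icc_neg (R := ℤ))
  have h2 := (Complex.continuous_re.tendsto _).comp h1
  simp only [Complex.ofReal_re] at h2
  refine h2.congr fun M => ?_
  simp only [Function.comp, rTP, TP]
  congr 1
  refine Finset.sum_congr rfl fun j _ => ?_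
  rw [fourier_coe_apply, smul_eq_mul]
  congr 2
  have : (π : ℂ) ≠ 0 := by exact_mod_cast Real.pi_ne_zero
  push_cast
  field_simp

/-- Dominated convergence for `Mk` under pointwise convergence of the data, as `|J₁| ≤ 1`. -/
lemma tendsto_Mk {A b : ℝ → ℝ} {A' b' : ℕ → ℝ → ℝ} (hA' : ∀ M, Continuous (A' M))
    (hb' : ∀ M, Continuous (b' M))
    (h1 : ∀ x, Filter.Tendsto (fun M => A' M x) Filter.atTop (nhds (A x)))
    (h2 : ∀ x, Filter.Tendsto (fun M => b' M x) Filter.atTop (nhds (b x))) (k : ℤ) :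
    Filter.Tendsto (fun M => Mk (A' M) (b' M) k) Filter.atTop (nhds (Mk A b k)) := by
  unfold Mk
  have cJ := J1_continuous
  apply intervalIntegral.tendsto_integral_filter_of_dominated_convergence (fun _ => 1)
  · refine Filter.Eventually.of_forall fun M => ?_
    have := hA' M
    have := hb' M
    have h : Continuous fun x => ((J1 ((k : ℝ) * A' M x) : ℝ) : ℂ) *
      Complex.exp (-Complex.I * (k : ℂ) * ((x + b' M x : ℝ) : ℂ)) := by fun_prop
    exact h.aestronglyMeasurable
  · refine Filter.Eventually.of_forall fun M => Filter.Eventually.of_forall fun x _ => ?_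
    rw [norm_mul, Complex.norm_real, Complex.norm_exp]
    simpa using abs_J1_le _
  · exact intervalIntegrable_const
  · refine Filter.Eventually.of_forall fun x _ => ?_
    have e : Continuous fun p : ℝ × ℝ => ((J1 ((k : ℝ) * p.1) : ℝ) : ℂ) *
      Complex.exp (-Complex.I * (k : ℂ) * ((x + p.2 : ℝ) : ℂ)) := by fun_prop
    have h := (e.tendsto (A x, b x)).comp ((h1 x).prodMk_nhds (h2 x))
    exact h

/-! ### The action functional -/

lemma sobNormR_nonneg (s : ℝ) (a : ℝ → ℝ) : 0 ≤ sobNormR s a := Real.sqrt_nonneg _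

lemma sum_le_sobNormR_sq (s : ℝ) {a : ℝ → ℝ} (ha : smoothPer a) (F : Finset ℤ) :
    ∑ j ∈ F, jb j ^ (2 * s) * ‖fcR a j‖ ^ 2 ≤ sobNormR s a ^ 2 := by
  have h0 : ∀ j : ℤ, 0 ≤ jb j ^ (2 * s) * ‖fcR a j‖ ^ 2 := fun j => by
    have := jb_pos j; positivity
  change _ ≤ Real.sqrt (∑' j : ℤ, jb j ^ (2 * s) * ‖fcR a j‖ ^ 2) ^ 2
  rw [Real.sq_sqrt (tsum_nonneg h0)]
  exact (summable_weight s ha).sum_le_tsum F fun j _ => h0 j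

/-- The embedding `H³ ⊂ C²`, on the side of the Fourier coefficients. -/
lemma wsum_le {a : ℝ → ℝ} (ha : smoothPer a) (F : Finset ℤ) :
    wsum (fcR a) F ≤ 2 * Real.sqrt (∑' j : ℤ, (jb j ^ 2)⁻¹) * sobNormR 3 a := by
  have h1 := Finset.sum_mul_sq_le_sq_mul_sq F (fun j => (jb j)⁻¹) (fun j => jb j ^ 3 * ‖fcR a j‖)
  have e1 : ∑ j ∈ F, (jb j)⁻¹ * (jb j ^ 3 * ‖fcR a j‖) = ∑ j ∈ F, jb j ^ 2 * ‖fcR a j‖ := by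
    refine Finset.sum_congr rfl fun j _ => ?_
    have := (jb_pos j).ne'
    field_simp
  have e2 : ∑ j ∈ F, (jb j ^ 3 * ‖fcR a j‖) ^ 2 ≤ sobNormR 3 a ^ 2 := by
    refine le_trans (le_of_eq ?_) (sum_le_sobNormR_sq 3 ha F)
    refine Finset.sum_congr rfl fun j _ => ?_
    rw [show (2 * 3 : ℝ) = ((6:ℕ):ℝ) by norm_num, Real.rpow_natCast]; ring
  have e3 : ∑ j ∈ F, (jb j)⁻¹ ^ 2 ≤ ∑' j : ℤ, (jb j ^ 2)⁻¹ := by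
    simp only [inv_pow]
    exact summable_jb.sum_le_tsum F fun j _ => by have := jb_pos j; positivity
  rw [e1] at h1
  have h2 : (∑ j ∈ F, jb j ^ 2 * ‖fcR a j‖) ^ 2 ≤
      (Real.sqrt (∑' j : ℤ, (jb j ^ 2)⁻¹) * sobNormR 3 a) ^ 2 := by
    rw [mul_pow, Real.sq_sqrt (tsum_nonneg fun j => by have := jb_pos j; positivity)]
    refine h1.trans ?_
    gcongr
  have h3 := abs_le_of_sq_le_sq' h2 (mul_nonneg (Real.sqrt_nonneg _) (sobNormR_nonneg _ _)) |>.2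
  unfold wsum
  simp only [mul_assoc]
  rw [← Finset.mul_sum]
  gcongr

/-- The tame estimate of the Fourier coefficients, passing to the limit in the truncation. -/
lemma Mk_sum_smooth {c : ℝ} (hc : 0 < c) {s : ℝ} (hs : 7 / 2 ≤ s) : ∃ C : ℝ, 0 < C ∧
    ∀ a b : ℝ → ℝ, smoothPer a → smoothPer b →
    (∀ F, wsum (fcR a) F ≤ c / 2) → (∀ F, wsum (fcR a) F ≤ 1 / 4) →
    (∀ F, wsum (fcR b) F ≤ 1 / 4) → ∀ N : ℕ,
    ∑ k ∈ Finset.Ico (1:ℤ) (2 ^ N), (k : ℝ) ^ (2 * s - 2) * ‖Mk (fun x => c + a x) b k‖ ^ 2 ≤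
      C * (1 + (sobNormR (s - 1 / 2) a ^ 2 + sobNormR (s - 1 / 2) b ^ 2)) := by
  obtain ⟨C, hC, h⟩ := Mk_sum hc hs
  refine ⟨C, hC, fun a b ha hb s1 s2 s3 N => ?_⟩
  have hlim : Filter.Tendsto (fun M : ℕ => ∑ k ∈ Finset.Ico (1:ℤ) (2 ^ N), (k : ℝ) ^ (2 * s - 2) *
      ‖Mk (fun x => c + rTP (fcR a) (Finset.Icc (-(M:ℤ)) M) x)
        (rTP (fcR b) (Finset.Icc (-(M:ℤ)) M)) k‖ ^ 2) Filter.atTop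
      (nhds (∑ k ∈ Finset.Ico (1:ℤ) (2 ^ N),
        (k : ℝ) ^ (2 * s - 2) * ‖Mk (fun x => c + a x) b k‖ ^ 2)) := by
    refine tendsto_finsetSum _ fun k _ => Filter.Tendsto.const_mul _ (Filter.Tendsto.pow ?_ 2)
    refine (tendsto_Mk (fun M => ?_) (fun M => rTP_continuous _ _) (fun x => ?_)
      (fun x => tendsto_rTP hb x) k).norm
    · exact continuous_const.add (rTP_continuous _ _)
    · exact (tendsto_rTP ha x).const_add c
  refine le_of_tendsto hlim (Filter.Eventually.of_forall fun M => ?_)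
  refine (h (fcR a) (fcR b) (Finset.Icc (-(M:ℤ)) M) (fcR_conj a) (fcR_conj b) (fun j hj => ?_)
    (s1 _) (s2 _) (s3 _) N).trans ?_
  · rw [Finset.mem_Icc] at *; omega
  · gcongr
    simp only [mul_add, Finset.sum_add_distrib]
    rw [show 2 * s - 1 = 2 * (s - 1 / 2) by ring]
    exact add_le_add (sum_le_sobNormR_sq _ ha _) (sum_le_sobNormR_sq _ hb _)

/-- The Fourier coefficients of `Sfun`; the coefficient of index `0` vanishes since `1 / 0 = 0`. -/
def cS (c : ℝ) (a b : ℝ → ℝ) (k : ℤ) : ℂ := (1 / (k : ℂ)) * Mk (fun x => c + a x) b k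

/-- `J₁` is real and odd, so opposite coefficients have the same modulus. -/
lemma norm_cS_neg (c : ℝ) (a b : ℝ → ℝ) (k : ℤ) : ‖cS c a b (-k)‖ = ‖cS c a b k‖ := by
  have e : Mk (fun x => c + a x) b (-k) = -(starRingEnd ℂ) (Mk (fun x => c + a x) b k) := by
    unfold Mk
    rw [← intervalIntegral.intervalIntegral_conj, ← intervalIntegral.integral_neg]
    refine intervalIntegral.integral_congr fun x _ => ?_
    rw [map_mul, Complex.conj_ofReal, ← Complex.exp_conj]
    have e1 : J1 (((-k : ℤ) : ℝ) * (c + a x)) = -J1 ((k:ℝ) * (c + a x)) := by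
      rw [← J1_neg]; congr 1; push_cast; ring
    rw [e1]
    push_cast
    rw [neg_mul]
    congr 3
    simp
  unfold cS
  rw [e]
  simp

/-- Two-sided bound for the weighted coefficients from the bound on positive dyadic ranges. -/
lemma cS_sum_le {c s B : ℝ} {a b : ℝ → ℝ}
    (h : ∀ N : ℕ, ∑ k ∈ Finset.Ico (1:ℤ) (2 ^ N),
      (k : ℝ) ^ (2 * s - 2) * ‖Mk (fun x => c + a x) b k‖ ^ 2 ≤ B) (T : Finset ℤ) :
    ∑ k ∈ T, jb k ^ (2 * s) * ‖cS c a b k‖ ^ 2 ≤ 2 * B := by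
  set f : ℤ → ℝ := fun k => jb k ^ (2 * s) * ‖cS c a b k‖ ^ 2 with hf
  have f0 : ∀ k, 0 ≤ f k := fun k => by have := jb_pos k; positivity
  have fneg : ∀ k, f (-k) = f k := fun k => by
    simp only [hf]
    rw [norm_cS_neg]
    simp [jb]
  have fz : f 0 = 0 := by simp [hf, cS]
  have hpos : ∀ T : Finset ℤ, (∀ k ∈ T, 0 < k) → ∑ k ∈ T, f k ≤ B := by
    intro T hT
    obtain ⟨N, hN⟩ : ∃ N : ℕ, ∀ k ∈ T, k < (2:ℤ) ^ N := by
      refine ⟨(∑ k ∈ T, k.natAbs), fun k hk => ?_⟩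
      have h1 : k.natAbs ≤ ∑ k ∈ T, k.natAbs :=
        Finset.single_le_sum (f := fun k : ℤ => k.natAbs) (fun _ _ => Nat.zero_le _) hk
      have h2 := Nat.lt_two_pow_self (n := ∑ k ∈ T, k.natAbs)
      have h3 : ((k.natAbs : ℕ) : ℤ) < ((2 ^ (∑ k ∈ T, k.natAbs) : ℕ) : ℤ) := by
        exact_mod_cast h1.trans_lt h2
      push_cast at h3
      exact (le_abs_self k).trans_lt h3
    refine le_trans ?_ (h N)
    refine (Finset.sum_le_sum_of_subset_of_nonneg (t := Finset.Ico (1:ℤ) (2 ^ N)) (fun k hk => ?_)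
      fun k _ _ => f0 k).trans (le_of_eq ?_)
    · exact Finset.mem_Ico.2 ⟨hT k hk, hN k hk⟩
    · refine Finset.sum_congr rfl fun k hk => ?_
      have hk1 : (1:ℝ) ≤ k := by exact_mod_cast (Finset.mem_Ico.1 hk).1
      have hk0 : (0:ℝ) < k := by linarith
      have ej : jb k = k := by rw [jb, abs_of_pos hk0, max_eq_right hk1]
      simp only [hf]
      rw [ej, cS, norm_mul, mul_pow, norm_div, norm_one, Complex.norm_intCast, abs_of_pos hk0,
        Real.rpow_sub hk0, Real.rpow_two]
      ring
  have e : ∑ k ∈ T, f k = ∑ k ∈ T.filter (fun k => 0 < k), f k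
      + ∑ k ∈ T.filter (fun k => ¬ 0 < k), f k := (Finset.sum_filter_add_sum_filter_not _ _ _).symm
  have e2 : ∑ k ∈ T.filter (fun k => ¬ 0 < k), f k ≤ B := by
    have e3 : ∑ k ∈ T.filter (fun k => ¬ 0 < k), f k =
        ∑ k ∈ ((T.filter (fun k => k < 0)).image (fun k => -k)), f k := by
      rw [Finset.sum_image (fun x _ y _ hxy => neg_injective hxy)]
      simp only [fneg, Finset.sum_filter]
      refine Finset.sum_congr rfl fun k _ => ?_
      rcases lt_trichotomy k 0 with hk | rfl | hk
      · rw [if_pos hk.not_gt, if_pos hk]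
      · simp [fz]
      · rw [if_neg (not_not.2 hk), if_neg hk.not_gt]
    rw [e3]
    refine hpos _ fun k hk => ?_
    obtain ⟨l, hl, rfl⟩ := Finset.mem_image.1 hk
    have := (Finset.mem_filter.1 hl).2
    omega
  have e4 := hpos (T.filter (fun k => 0 < k)) fun k hk => (Finset.mem_filter.1 hk).2
  rw [e]; linarith

lemma Sfun_eq (c : ℝ) (a b : ℝ → ℝ) (I : ℝ) :
    Sfun c a b I = ∑' k : ℤ, cS c a b k * Complex.exp (Complex.I * (k : ℂ) * (I : ℂ)) := by
  unfold Sfun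
  refine tsum_congr fun k => ?_
  split_ifs with hk
  · subst hk; simp [cS]
  · rfl

/-- An absolutely convergent Fourier series may be integrated term by term. -/
lemma fc_Sfun {c : ℝ} {a b : ℝ → ℝ} (h : Summable fun k => ‖cS c a b k‖) (k : ℤ) :
    fc (Sfun c a b) k = cS c a b k := by
  have hπ : (π : ℂ) ≠ 0 := by exact_mod_cast Real.pi_ne_zero
  set F : ℤ → ℝ → ℂ := fun l x => cS c a b l * Complex.exp (Complex.I * (l : ℂ) * (x : ℂ)) *
    Complex.exp (-Complex.I * (k : ℂ) * (x : ℂ)) with hF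
  have nF : ∀ l x, ‖F l x‖ = ‖cS c a b l‖ := fun l x => by
    simp only [hF]
    rw [norm_mul, norm_mul, Complex.norm_exp, Complex.norm_exp]; simp
  have hs : HasSum (fun l => ∫ x in (0:ℝ)..(2 * π), F l x)
      (∫ x in (0:ℝ)..(2 * π), Sfun c a b x * Complex.exp (-Complex.I * (k : ℂ) * (x : ℂ))) := by
    apply intervalIntegral.hasSum_integral_of_dominated_convergence (fun l _ => ‖cS c a b l‖)
    · intro l
      have : Continuous (F l) := by fun_prop
      exact this.aestronglyMeasurable
    · exact fun l => Filter.Eventually.of_forall fun x _ => (nF l x).le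
    · exact Filter.Eventually.of_forall fun x _ => h
    · exact intervalIntegrable_const
    · refine Filter.Eventually.of_forall fun x _ => ?_
      rw [Sfun_eq]
      apply HasSum.mul_right
      apply Summable.hasSum
      refine Summable.of_norm_bounded h fun l => ?_
      rw [norm_mul, Complex.norm_exp]; simp
  have ei : ∀ l, ∫ x in (0:ℝ)..(2 * π), F l x = if l = k then cS c a b k * (2 * π) else 0 := by
    intro l
    have h0 := char_orth (ψ := fun _ => 0) (ψ' := fun _ => 0) (fun x => hasDerivAt_const x 0)
      continuous_const rfl (k - l)
    simp only [add_zero, Complex.ofReal_one, mul_one] at h0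
    have e : ∫ x in (0:ℝ)..(2 * π), F l x = cS c a b l *
        ∫ x in (0:ℝ)..(2 * π), Complex.exp (-(Complex.I * ((k - l : ℤ) : ℂ) * (x : ℂ))) := by
      rw [← intervalIntegral.integral_const_mul]
      refine intervalIntegral.integral_congr fun x _ => ?_
      simp only [hF]
      rw [mul_assoc, ← Complex.exp_add]
      congr 2
      push_cast; ring
    rw [e, h0]
    by_cases hl : l = k
    · subst hl; simp
    · rw [if_neg (sub_ne_zero.2 (Ne.symm hl)), if_neg hl, mul_zero]
  simp only [ei] at hs
  have hu := hs.unique (hasSum_ite_eq k (cS c a b k * (2 * π)))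
  unfold fc
  rw [hu]
  field_simp

/-- tame estimates for the action functional S. -/
theorem statement12 (Astar : ℝ) (hAstar : 0 < Astar) :
    ∃ δ : ℝ, 0 < δ ∧ ∀ s : ℝ, (7 : ℝ) / 2 ≤ s → ∃ C : ℝ, 0 < C ∧
      ∀ a b : ℝ → ℝ, smoothPer a → smoothPer b → pairNorm 3 a b < δ →
        sobNorm s (Sfun Astar a b) ≤ C * (1 + pairNorm (s - 1 / 2) a b) := by
  set κ := Real.sqrt (∑' j : ℤ, (jb j ^ 2)⁻¹) with hκ
  have hκ0 : 0 ≤ κ := Real.sqrt_nonneg _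
  set ε := min (Astar / 2) (1 / 4) with hε
  have hε0 : 0 < ε := lt_min (by positivity) (by norm_num)
  refine ⟨ε / (2 * κ + 1), by positivity, fun s hs => ?_⟩
  obtain ⟨C, hC, hmain⟩ := Mk_sum_smooth hAstar hs
  obtain ⟨C₀, hC₀, hmain₀⟩ := Mk_sum_smooth hAstar (le_refl (7 / 2 : ℝ))
  refine ⟨Real.sqrt (2 * C), by positivity, fun a b ha hb hab => ?_⟩
  have hna := sobNormR_nonneg 3 a
  have hnb := sobNormR_nonneg 3 b
  have small : ∀ u : ℝ → ℝ, smoothPer u → sobNormR 3 u ≤ pairNorm 3 a b → ∀ F,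
      wsum (fcR u) F ≤ ε := by
    intro u hu hle F
    have h1 : sobNormR 3 u ≤ ε / (2 * κ + 1) := hle.trans hab.le
    rw [le_div_iff₀ (by positivity)] at h1
    have h2 := wsum_le hu F
    rw [← hκ] at h2
    nlinarith [sobNormR_nonneg 3 u]
  have sa := small a ha (by unfold pairNorm; linarith)
  have sb := small b hb (by unfold pairNorm; linarith)
  have ε1 : ε ≤ Astar / 2 := min_le_left _ _
  have ε2 : ε ≤ 1 / 4 := min_le_right _ _
  have sa1 := fun F => (sa F).trans ε1
  have sa2 := fun F => (sa F).trans ε2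
  have sb2 := fun F => (sb F).trans ε2
  have hT := cS_sum_le (hmain a b ha hb sa1 sa2 sb2)
  have hT₀ := cS_sum_le (hmain₀ a b ha hb sa1 sa2 sb2)
  -- The case `s = 7/2` gives the absolute convergence of the series defining `Sfun`.
  have hsum : Summable fun k => ‖cS Astar a b k‖ := by
    have h1 := summable_of_sum_le (fun k => by have := jb_pos k; positivity) hT₀
    refine Summable.of_nonneg_of_le (fun k => norm_nonneg _) (fun k => ?_) (summable_jb.add h1)
    have hj := one_le_jb k
    have hj0 := jb_pos k
    have h2 : jb k ^ 2 ≤ jb k ^ (2 * (7 / 2 : ℝ)) := by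
      rw [← Real.rpow_two]
      exact Real.rpow_le_rpow_of_exponent_le hj (by norm_num)
    have h3 : jb k ^ 2 * ‖cS Astar a b k‖ ^ 2 ≤ jb k ^ (2 * (7 / 2 : ℝ)) * ‖cS Astar a b k‖ ^ 2 := by
      gcongr
    refine le_trans ?_ (add_le_add le_rfl h3)
    have e : (jb k ^ 2)⁻¹ = (jb k)⁻¹ ^ 2 := by rw [inv_pow]
    have e1 : ‖cS Astar a b k‖ = (jb k)⁻¹ * (jb k * ‖cS Astar a b k‖) := by field_simp
    rw [e, ← mul_pow]
    nlinarith [sq_nonneg ((jb k)⁻¹ - jb k * ‖cS Astar a b k‖), inv_pos.2 hj0,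
      mul_nonneg hj0.le (norm_nonneg (cS Astar a b k)), sq_nonneg ((jb k)⁻¹ + jb k * ‖cS Astar a b k‖)]
  set na := sobNormR (s - 1 / 2) a with hna'
  set nb := sobNormR (s - 1 / 2) b with hnb'
  have na0 : 0 ≤ na := sobNormR_nonneg _ _
  have nb0 : 0 ≤ nb := sobNormR_nonneg _ _
  have hfin : ∑' k : ℤ, jb k ^ (2 * s) * ‖fc (Sfun Astar a b) k‖ ^ 2 ≤
      2 * C * (1 + (na + nb)) ^ 2 := by
    simp only [fc_Sfun hsum]
    refine (Real.tsum_le_of_sum_le (fun k => by have := jb_pos k; positivity) hT).trans ?_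
    rw [← mul_assoc]
    gcongr
    nlinarith [mul_nonneg na0 nb0]
  unfold sobNorm pairNorm
  calc _ ≤ Real.sqrt (2 * C * (1 + (na + nb)) ^ 2) := Real.sqrt_le_sqrt hfin
    _ = _ := by rw [Real.sqrt_mul (by positivity), Real.sqrt_sq (by positivity)]
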